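/- arXiv:1807.02396 — 2 statements merged into one kernel-verified Lean document; each statement's English description precedes it below -/
import Mathlib

section
/- For every n ≥ 1 and every θ ∈ ℝⁿ, the ψ₂-norm of the linear functional x ↦ ⟨x, θ⟩ with respect to the cone probability measure μ on the boundary of the unit ℓ¹-ball B₁ⁿ satisfies √n · ‖⟨·, θ⟩‖_{L^{ψ₂}(μ)} ≤ √6 · ‖θ‖_∞. -/
open MeasureTheory

/-- The cone over a set `B` with apex at the origin. -/
def coneSet {n : ℕ} (B : Set (Fin n → ℝ)) : Set (Fin n → ℝ) :=
  {y | ∃ x ∈ B, ∃ r ∈ Set.Icc (0 : ℝ) 1, y = r • x}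

/-- `μ` is the cone probability measure on the boundary of `K`. -/
def IsConeMeasure {n : ℕ} (K : Set (Fin n → ℝ)) (μ : Measure (Fin n → ℝ)) : Prop :=
  IsProbabilityMeasure μ ∧ μ (frontier K)ᶜ = 0 ∧
    ∀ B ⊆ frontier K, MeasurableSet B → μ B = volume (coneSet B) / volume K

/-- The `ψ₂`-Orlicz (Luxemburg) norm of `g` with respect to `μ`. -/
noncomputable def psi2Norm {α : Type*} [MeasurableSpace α] (μ : Measure α)
    (g : α → ℝ) : ℝ :=
  sInf {c : ℝ | 0 < c ∧ ∫ x, Real.exp ((|g x| / c) ^ 2) ∂μ ≤ 2}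

/-!
If `X` has density proportional to `exp (-‖x‖₁)`, then in polar coordinates the direction
`X / ‖X‖₁` is independent of `‖X‖₁` and distributed according to the cone measure, while `‖X‖₁` has
a Gamma distribution. Hence the even moments of `⟨·, θ⟩` under the cone measure can be read off
from those of a vector with independent Laplace coordinates, which a multinomial expansion
evaluates. They satisfy `∫ ⟨x, θ⟩ ^ (2 * k) ≤ (2 * k)! / k ! * (‖θ‖_∞ ^ 2 / n) ^ k`, so the
exponential series of `⟨x, θ⟩ ^ 2 / c ^ 2` is dominated by the generating function of the central
binomial coefficients at `‖θ‖_∞ ^ 2 / (n * c ^ 2)`, which is at most `2` at `1 / 6`.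
-/

open Set Metric Module Real
open scoped Nat Pointwise ENNReal

section Orlicz

theorem centralBinom_succ_le (k : ℕ) : (k + 1).centralBinom ≤ 2 * 4 ^ k := by
  induction k with
  | zero => decide
  | succ k ih =>
    refine Nat.le_of_mul_le_mul_left (c := k + 2) ?_ (by positivity)
    calc (k + 2) * (k + 2).centralBinom
        = 2 * (2 * (k + 1) + 1) * (k + 1).centralBinom := Nat.succ_mul_centralBinom_succ (k + 1)
      _ ≤ ((k + 2) * 4) * (2 * 4 ^ k) := Nat.mul_le_mul (by lia) ih
      _ = (k + 2) * (2 * 4 ^ (k + 1)) := by ring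

theorem summable_centralBinom_mul_pow {x : ℝ} (hx₀ : 0 ≤ x) (hx : x < 1 / 4) :
    Summable fun k : ℕ ↦ (k.centralBinom : ℝ) * x ^ k := by
  refine .of_nonneg_of_le (fun k ↦ by positivity) (fun k ↦ ?_)
    (summable_geometric_of_lt_one (r := 4 * x) (by positivity) (by linarith))
  rw [mul_pow]
  gcongr
  exact_mod_cast k.centralBinom_le_four_pow

theorem tsum_centralBinom_mul_pow_le {x : ℝ} (hx₀ : 0 ≤ x) (hx : x < 1 / 4) :
    ∑' k : ℕ, (k.centralBinom : ℝ) * x ^ k ≤ 1 + 2 * x / (1 - 4 * x) := by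
  have hsum := summable_centralBinom_mul_pow hx₀ hx
  have hgeom : HasSum (fun k : ℕ ↦ 2 * x * (4 * x) ^ k) (2 * x / (1 - 4 * x)) :=
    (hasSum_geometric_of_lt_one (by positivity) (by linarith)).mul_left (2 * x)
  rw [hsum.tsum_eq_zero_add, Nat.centralBinom_zero, Nat.cast_one, pow_zero, one_mul]
  gcongr
  rw [← hgeom.tsum_eq]
  refine ((summable_nat_add_iff 1).2 hsum).tsum_le_tsum (fun k ↦ ?_) hgeom.summable
  calc ((k + 1).centralBinom : ℝ) * x ^ (k + 1) ≤ (2 * 4 ^ k) * x ^ (k + 1) := by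
        gcongr
        exact_mod_cast centralBinom_succ_le k
    _ = 2 * x * (4 * x) ^ k := by ring

theorem integral_exp_mul_sq_le {α : Type*} [MeasurableSpace α] {μ : Measure α} {f : α → ℝ}
    {s t : ℝ} (hf : ∀ k, Integrable (fun x ↦ f x ^ (2 * k)) μ)
    (hmoment : ∀ k, ∫ x, f x ^ (2 * k) ∂μ ≤ (2 * k)! / k ! * s ^ k)
    (hs : 0 ≤ s) (ht : 0 ≤ t) (hts : t * s < 1 / 4) :
    ∫ x, exp (t * f x ^ 2) ∂μ ≤ 1 + 2 * (t * s) / (1 - 4 * (t * s)) := by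
  let F : ℕ → α → ℝ := fun k x ↦ t ^ k / k ! * f x ^ (2 * k)
  have hF_nonneg (k : ℕ) (x : α) : 0 ≤ F k x :=
    mul_nonneg (by positivity) ((even_two_mul k).pow_nonneg _)
  have hF_int (k : ℕ) : Integrable (F k) μ := (hf k).const_mul _
  have hF_le (k : ℕ) : ∫ x, F k x ∂μ ≤ k.centralBinom * (t * s) ^ k := by
    calc ∫ x, F k x ∂μ = t ^ k / k ! * ∫ x, f x ^ (2 * k) ∂μ := integral_const_mul _ _
      _ ≤ t ^ k / k ! * ((2 * k)! / k ! * s ^ k) := by gcongr; exact hmoment k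
      _ = k.centralBinom * (t * s) ^ k := by
        rw [Nat.centralBinom, Nat.cast_choose ℝ (by lia : k ≤ 2 * k), mul_pow,
          show 2 * k - k = k by lia]
        field_simp
  have hsum_int : Summable fun k ↦ ∫ x, F k x ∂μ :=
    .of_nonneg_of_le (fun k ↦ integral_nonneg (hF_nonneg k)) hF_le
      (summable_centralBinom_mul_pow (by positivity) hts)
  have hexp (x : α) : exp (t * f x ^ 2) = ∑' k, F k x := by
    rw [exp_eq_exp_ℝ, NormedSpace.exp_eq_tsum_div]
    refine tsum_congr fun k ↦ ?_
    rw [mul_pow, ← pow_mul, mul_div_right_comm]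
  calc ∫ x, exp (t * f x ^ 2) ∂μ = ∑' k, ∫ x, F k x ∂μ := by
        simp only [hexp]
        refine (integral_tsum_of_summable_integral_norm hF_int ?_).symm
        simpa only [norm_of_nonneg (hF_nonneg _ _)] using hsum_int
    _ ≤ ∑' k : ℕ, (k.centralBinom : ℝ) * (t * s) ^ k :=
      hsum_int.tsum_le_tsum hF_le (summable_centralBinom_mul_pow (by positivity) hts)
    _ ≤ _ := tsum_centralBinom_mul_pow_le (by positivity) hts

theorem psi2Norm_le {α : Type*} [MeasurableSpace α] {μ : Measure α} {f : α → ℝ} {c : ℝ}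
    (hc : 0 < c) (h : ∫ x, exp ((|f x| / c) ^ 2) ∂μ ≤ 2) : psi2Norm μ f ≤ c :=
  csInf_le ⟨0, fun _ hb ↦ hb.1.le⟩ ⟨hc, h⟩

theorem psi2Norm_le_sqrt {α : Type*} [MeasurableSpace α] {μ : Measure α} {f : α → ℝ}
    {s : ℝ} (hf : ∀ k, Integrable (fun x ↦ f x ^ (2 * k)) μ)
    (hmoment : ∀ k, ∫ x, f x ^ (2 * k) ∂μ ≤ (2 * k)! / k ! * s ^ k) (hs : 0 ≤ s) :
    psi2Norm μ f ≤ √(6 * s) := by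
  refine le_of_forall_gt_imp_ge_of_dense fun c hc ↦ ?_
  have hc₀ : 0 < c := (sqrt_nonneg _).trans_lt hc
  have hsc : (c ^ 2)⁻¹ * s ≤ 1 / 6 := by
    rw [inv_mul_le_iff₀ (by positivity)]
    linarith [(sqrt_lt' hc₀).1 hc]
  refine psi2Norm_le hc₀ ?_
  calc ∫ x, exp ((|f x| / c) ^ 2) ∂μ = ∫ x, exp ((c ^ 2)⁻¹ * f x ^ 2) ∂μ := by
        simp only [div_pow, sq_abs, div_eq_inv_mul (_ ^ 2)]
    _ ≤ 1 + 2 * ((c ^ 2)⁻¹ * s) / (1 - 4 * ((c ^ 2)⁻¹ * s)) :=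
      integral_exp_mul_sq_le hf hmoment hs (by positivity) (by linarith)
    _ ≤ 1 + 1 := by
      gcongr
      rw [div_le_one (by linarith)]
      linarith
    _ = 2 := one_add_one_eq_two

end Orlicz

theorem integrableOn_pow_mul_exp_neg (k : ℕ) :
    IntegrableOn (fun r : ℝ ↦ r ^ k * exp (-r)) (Ioi 0) := by
  simpa [mul_comm] using GammaIntegral_convergent (s := k + 1) (by positivity)

theorem integral_pow_mul_exp_neg (k : ℕ) :
    ∫ r in Ioi (0 : ℝ), r ^ k * exp (-r) = k ! := by
  simpa [mul_comm, Gamma_nat_eq_factorial] using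
    (Gamma_eq_integral (s := k + 1) (by positivity)).symm

theorem integral_volumeIoiPow {F : Type*} [NormedAddCommGroup F] [NormedSpace ℝ F] (n : ℕ)
    (f : ℝ → F) :
    ∫ r, f r ∂Measure.volumeIoiPow n = ∫ r in Ioi (0 : ℝ), r ^ n • f r := by
  rw [Measure.volumeIoiPow, integral_withDensity_eq_integral_toReal_smul (by fun_prop) (by simp),
    ← integral_subtype_comap measurableSet_Ioi]
  refine integral_congr_ae (.of_forall fun r ↦ ?_)
  simp only [ENNReal.toReal_ofReal (pow_nonneg (le_of_lt r.2) n)]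

section

variable {E : Type*} [NormedAddCommGroup E] [NormedSpace ℝ E] [FiniteDimensional ℝ E]
  [Nontrivial E] [MeasurableSpace E] [BorelSpace E] (ν : Measure E) [ν.IsAddHaarMeasure]

theorem integral_homogeneous_mul_fun_norm {g : E → ℝ} {p : ℕ}
    (hg : ∀ r > 0, ∀ x, g (r • x) = r ^ p * g x) (w : ℝ → ℝ) :
    ∫ x, g x * w ‖x‖ ∂ν =
      (∫ u, g u ∂ν.toSphere) * ∫ r in Ioi (0 : ℝ), r ^ (finrank ℝ E - 1 + p) * w r := by
  have hpolar (x : ({0}ᶜ : Set E)) : g x * w ‖(x : E)‖ =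
      g (homeomorphUnitSphereProd E x).1 * ((homeomorphUnitSphereProd E x).2.1 ^ p *
        w (homeomorphUnitSphereProd E x).2.1) := by
    have hx : 0 < ‖(x : E)‖ := norm_pos_iff.2 x.2
    have hgx : g x = ‖(x : E)‖ ^ p * g (‖(x : E)‖⁻¹ • (x : E)) := by
      rw [← hg _ hx, smul_inv_smul₀ hx.ne']
    simp only [homeomorphUnitSphereProd_apply_fst_coe, homeomorphUnitSphereProd_apply_snd_coe, hgx]
    ring
  calc ∫ x, g x * w ‖x‖ ∂ν = ∫ x : ({0}ᶜ : Set E), g x * w ‖(x : E)‖ ∂ν.comap (↑) := by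
        rw [integral_subtype_comap (measurableSet_singleton 0).compl fun x ↦ g x * w ‖x‖,
          restrict_compl_singleton]
    _ = ∫ z, g z.1 * ((z.2 : ℝ) ^ p * w z.2)
          ∂ν.toSphere.prod (Measure.volumeIoiPow (finrank ℝ E - 1)) := by
        simp only [hpolar]
        exact ν.measurePreserving_homeomorphUnitSphereProd.integral_comp
          (Homeomorph.measurableEmbedding _)
          fun z : sphere (0 : E) 1 × Ioi (0 : ℝ) ↦ g z.1 * ((z.2 : ℝ) ^ p * w z.2)
    _ = _ := by
        rw [integral_prod_mul (fun u : sphere (0 : E) 1 ↦ g u)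
          (fun r : Ioi (0 : ℝ) ↦ (r : ℝ) ^ p * w r),
          integral_volumeIoiPow _ fun r ↦ r ^ p * w r]
        simp only [smul_eq_mul, pow_add, mul_assoc]

theorem measure_Icc_smul_eq_measure_Ioo_smul {s : Set E} (hs : s ⊆ sphere 0 1) :
    ν (Icc (0 : ℝ) 1 • s) = ν (Ioo (0 : ℝ) 1 • s) := by
  refine le_antisymm ?_ (measure_mono (smul_subset_smul_right Ioo_subset_Icc_self))
  have hsub : Icc (0 : ℝ) 1 • s ⊆ Ioo (0 : ℝ) 1 • s ∪ ({0} ∪ sphere 0 1) := by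
    rintro _ ⟨r, ⟨hr₀, hr₁⟩, x, hx, rfl⟩
    rcases hr₀.eq_or_lt with rfl | hr₀
    · simp
    rcases hr₁.eq_or_lt with rfl | hr₁
    · simpa using Or.inr (Or.inr (hs hx))
    · exact .inl (smul_mem_smul ⟨hr₀, hr₁⟩ hx)
  calc ν (Icc (0 : ℝ) 1 • s) ≤ ν (Ioo (0 : ℝ) 1 • s ∪ ({0} ∪ sphere 0 1)) := measure_mono hsub
    _ = ν (Ioo (0 : ℝ) 1 • s) :=
      measure_congr (union_ae_eq_left_of_ae_eq_empty <| ae_eq_empty.2 <|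
        measure_union_null (measure_singleton 0) (ν.addHaar_sphere 0 1))

end

theorem frontier_image_closedBall {E F : Type*} [NormedAddCommGroup E] [NormedSpace ℝ E]
    [TopologicalSpace F] [AddCommMonoid F] [Module ℝ F] (L : E ≃L[ℝ] F) {x : E} {r : ℝ}
    (hr : r ≠ 0) : frontier (L '' closedBall x r) = L '' sphere x r := by
  rw [← frontier_closedBall x hr]
  exact (L.toHomeomorph.image_frontier _).symm

theorem coneSet_eq_smul {n : ℕ} (B : Set (Fin n → ℝ)) : coneSet B = Icc (0 : ℝ) 1 • B := by
  ext y
  simp only [coneSet, mem_smul, Set.mem_ofPred_eq]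
  grind

theorem coneSet_image {n : ℕ} {E F : Type*} [SMul ℝ E] [FunLike F E (Fin n → ℝ)]
    [MulActionHomClass F ℝ E (Fin n → ℝ)] (f : F) (s : Set E) :
    coneSet (f '' s) = f '' (Icc (0 : ℝ) 1 • s) := by
  rw [coneSet_eq_smul]
  exact (image_image2_distrib_right fun r x ↦ map_smul f r x).symm

namespace IsConeMeasure

variable {n : ℕ} {μ : Measure (Fin n → ℝ)}

theorem integrable_of_continuous {K : Set (Fin n → ℝ)} (hμ : IsConeMeasure K μ)
    (hK : Bornology.IsBounded K) {F : Type*} [NormedAddCommGroup F] {f : (Fin n → ℝ) → F}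
    (hf : Continuous f) : Integrable f μ := by
  obtain ⟨_, hfrontier, -⟩ := hμ
  rw [← Measure.restrict_eq_self_of_ae_mem (mem_ae_iff.2 hfrontier)]
  exact hf.continuousOn.integrableOn_compact
    (hK.isCompact_closure.of_isClosed_subset isClosed_frontier frontier_subset_closure)

variable {E : Type*} [NormedAddCommGroup E] [NormedSpace ℝ E] [FiniteDimensional ℝ E]
  [Nontrivial E] [MeasurableSpace E] [BorelSpace E] {L : E ≃L[ℝ] (Fin n → ℝ)}

theorem smul_eq_map_toSphere (hμ : IsConeMeasure (L '' closedBall 0 1) μ) :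
    (n * volume (L '' closedBall 0 1)) • μ =
      (Measure.map L.symm volume).toSphere.map (fun u : sphere (0 : E) 1 ↦ L u) := by
  have hdim : finrank ℝ E = n := by simp [L.toLinearEquiv.finrank_eq]
  obtain ⟨_, hfrontier, hcone⟩ := hμ
  rw [frontier_image_closedBall L one_ne_zero] at hfrontier hcone
  have hmap (s : Set E) : Measure.map L.symm volume s = volume (L '' s) := by
    rw [L.image_eq_preimage_symm]
    exact L.symm.toHomeomorph.toMeasurableEquiv.map_apply s
  have hvol₀ : volume (L '' closedBall 0 1) ≠ 0 := by
    rw [← hmap]; exact (measure_closedBall_pos _ 0 one_pos).ne'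
  have hvol : volume (L '' closedBall 0 1) ≠ ∞ := by
    rw [← hmap]; exact measure_closedBall_lt_top.ne
  have hLu : Measurable fun u : sphere (0 : E) 1 ↦ L u :=
    L.continuous.measurable.comp measurable_subtype_coe
  ext B hB
  have hinter : B ∩ L '' sphere 0 1 =
      L '' ((↑) '' ((fun u : sphere (0 : E) 1 ↦ L u) ⁻¹' B)) := by
    rw [inter_comm, ← image_inter_preimage, ← Subtype.image_preimage_coe]
    rfl
  have hsphere : MeasurableSet (L '' sphere 0 1) := by
    rw [← frontier_image_closedBall L one_ne_zero]
    exact measurableSet_frontier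
  calc (n * volume (L '' closedBall 0 1)) • μ B
      = n * (volume (L '' closedBall 0 1) * μ (B ∩ L '' sphere 0 1)) := by
        rw [measure_inter_conull hfrontier, smul_eq_mul, mul_assoc]
    _ = n * volume (coneSet (B ∩ L '' sphere 0 1)) := by
        rw [hcone _ inter_subset_right (hB.inter hsphere), ENNReal.mul_div_cancel hvol₀ hvol]
    _ = n * Measure.map L.symm volume
          (Ioo (0 : ℝ) 1 • ((↑) '' ((fun u : sphere (0 : E) 1 ↦ L u) ⁻¹' B))) := by
        rw [hinter, coneSet_image, ← hmap, measure_Icc_smul_eq_measure_Ioo_smul]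
        simp
    _ = _ := by
        rw [Measure.map_apply hLu hB, Measure.toSphere_apply' _ (hLu hB), hdim]

theorem integral_homogeneous_mul_exp_neg_norm (hμ : IsConeMeasure (L '' closedBall 0 1) μ)
    {g : (Fin n → ℝ) → ℝ} {p : ℕ} (hg : ∀ r > 0, ∀ x, g (r • x) = r ^ p * g x) :
    ∫ x, g x * exp (-‖L.symm x‖) =
      n * volume.real (L '' closedBall 0 1) * (n - 1 + p)! * ∫ x, g x ∂μ := by
  have hdim : finrank ℝ E = n := by simp [L.toLinearEquiv.finrank_eq]
  have hL : MeasurableEmbedding (L.symm : (Fin n → ℝ) → E) :=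
    L.symm.toHomeomorph.measurableEmbedding
  have hLu : MeasurableEmbedding fun u : sphere (0 : E) 1 ↦ L u :=
    L.toHomeomorph.measurableEmbedding.comp (.subtype_coe isClosed_sphere.measurableSet)
  calc ∫ x, g x * exp (-‖L.symm x‖)
      = ∫ y, g (L y) * exp (-‖y‖) ∂Measure.map L.symm volume := by
        simp only [hL.integral_map, L.apply_symm_apply]
    _ = (∫ u, g (L u) ∂(Measure.map L.symm volume).toSphere) *
          ∫ r in Ioi (0 : ℝ), r ^ (n - 1 + p) * exp (-r) := by
        rw [integral_homogeneous_mul_fun_norm _ (g := fun y ↦ g (L y))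
          (fun r hr y ↦ by rw [map_smul, hg r hr]) (fun r ↦ exp (-r)), hdim]
    _ = (∫ x, g x ∂(n * volume (L '' closedBall 0 1)) • μ) * (n - 1 + p)! := by
        rw [hμ.smul_eq_map_toSphere, hLu.integral_map, integral_pow_mul_exp_neg]
    _ = _ := by
        rw [integral_smul_measure, smul_eq_mul, ENNReal.toReal_mul, ENNReal.toReal_natCast,
          measureReal_def]
        ring

end IsConeMeasure

theorem integrable_pow_mul_exp_neg_abs (k : ℕ) : Integrable fun x : ℝ ↦ x ^ k * exp (-|x|) := by
  have hIoi : IntegrableOn (fun x : ℝ ↦ x ^ k * exp (-|x|)) (Ioi 0) :=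
    (integrableOn_pow_mul_exp_neg k).congr_fun
      (fun x hx ↦ by simp only [abs_of_pos (mem_Ioi.1 hx)]) measurableSet_Ioi
  have hIio : IntegrableOn (fun x : ℝ ↦ x ^ k * exp (-|x|)) (Iio 0) := by
    have hneg : IntegrableOn (fun x : ℝ ↦ (-1) ^ k * ((-x) ^ k * exp (-|-x|))) (Iio 0) := by
      simpa only [IntegrableOn, neg_Ioi, neg_zero] using hIoi.comp_neg.const_mul ((-1) ^ k)
    simpa only [abs_neg, ← mul_assoc, ← mul_pow, neg_mul_neg, one_mul] using hneg
  rw [← integrableOn_univ, ← Iic_union_Ioi (a := (0 : ℝ))]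
  exact ((integrableOn_Iic_iff_integrableOn_Iio (by simp)).2 hIio).union hIoi

theorem integral_pow_mul_exp_neg_abs_of_even {k : ℕ} (hk : Even k) :
    ∫ x : ℝ, x ^ k * exp (-|x|) = 2 * k ! := by
  rw [← integral_pow_mul_exp_neg, ← integral_comp_abs (f := fun r ↦ r ^ k * exp (-r))]
  simp only [hk.pow_abs]

theorem integral_pow_mul_exp_neg_abs_of_odd {k : ℕ} (hk : Odd k) :
    ∫ x : ℝ, x ^ k * exp (-|x|) = 0 := by
  have h := integral_neg_eq_self (fun x : ℝ ↦ x ^ k * exp (-|x|)) volume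
  simp only [abs_neg, hk.neg_pow, neg_mul, integral_neg] at h
  linarith

section
variable {ι : Type*} [Fintype ι] [DecidableEq ι]

theorem integral_sum_mul_pow_mul_prod {w : ℝ → ℝ}
    (hw : ∀ j, Integrable fun t : ℝ ↦ t ^ j * w t) (θ : ι → ℝ) (k : ℕ) :
    ∫ x : ι → ℝ, (∑ i, x i * θ i) ^ k * ∏ i, w (x i) =
      ∑ a ∈ Finset.piAntidiag Finset.univ k,
        (Nat.multinomial Finset.univ a : ℝ) * ∏ i, θ i ^ a i * ∫ t, t ^ a i * w t := by
  have hexpand (x : ι → ℝ) : (∑ i, x i * θ i) ^ k * ∏ i, w (x i) =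
      ∑ a ∈ Finset.piAntidiag Finset.univ k,
        (Nat.multinomial Finset.univ a : ℝ) * ∏ i, θ i ^ a i * (x i ^ a i * w (x i)) := by
    rw [Finset.sum_pow_eq_sum_piAntidiag, Finset.sum_mul]
    refine Finset.sum_congr rfl fun a _ ↦ ?_
    rw [mul_assoc, ← Finset.prod_mul_distrib]
    congr! 2 with i
    ring
  have hint (a : ι → ℕ) :
      Integrable fun x : ι → ℝ ↦ ∏ i, θ i ^ a i * (x i ^ a i * w (x i)) :=
    .fintype_prod (f := fun i t ↦ θ i ^ a i * (t ^ a i * w t)) fun i ↦ (hw (a i)).const_mul _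
  simp only [hexpand]
  rw [integral_finsetSum _ fun a _ ↦ (hint a).const_mul _]
  refine Finset.sum_congr rfl fun a _ ↦ ?_
  rw [integral_const_mul,
    integral_fintype_prod_volume_eq_prod fun i t ↦ θ i ^ a i * (t ^ a i * w t)]
  simp only [integral_const_mul]

theorem integral_sum_mul_pow_mul_exp_neg_sum_abs (θ : ι → ℝ) (k : ℕ) :
    ∫ x : ι → ℝ, (∑ i, x i * θ i) ^ (2 * k) * exp (-∑ i, |x i|) =
      2 ^ Fintype.card ι * (2 * k)! *
        ∑ b ∈ Finset.piAntidiag Finset.univ k, ∏ i, θ i ^ (2 * b i) := by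
  have hodd (a : ι → ℕ) (ha : ¬∀ i, 2 ∣ a i) :
      ∏ i, θ i ^ a i * ∫ t : ℝ, t ^ a i * exp (-|t|) = 0 := by
    obtain ⟨i, hi⟩ := not_forall.1 ha
    refine Finset.prod_eq_zero (Finset.mem_univ i) ?_
    rw [integral_pow_mul_exp_neg_abs_of_odd (by rwa [← Nat.not_even_iff_odd, even_iff_two_dvd]),
      mul_zero]
  have heven (b : ι → ℕ) (hb : b ∈ Finset.piAntidiag Finset.univ k) :
      (Nat.multinomial Finset.univ (2 • b) : ℝ) *
          ∏ i, θ i ^ (2 • b) i * ∫ t : ℝ, t ^ (2 • b) i * exp (-|t|) =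
        2 ^ Fintype.card ι * (2 * k)! * ∏ i, θ i ^ (2 * b i) := by
    have hspec := Nat.multinomial_spec Finset.univ (2 • b)
    simp only [Pi.smul_apply, smul_eq_mul, ← Finset.mul_sum, (Finset.mem_piAntidiag.1 hb).1]
      at hspec ⊢
    simp only [integral_pow_mul_exp_neg_abs_of_even (even_two_mul _), Finset.prod_mul_distrib,
      Finset.prod_const, Finset.card_univ, ← hspec, Nat.cast_mul, Nat.cast_prod]
    ring
  simp only [← Finset.sum_neg_distrib, exp_sum]
  rw [integral_sum_mul_pow_mul_prod integrable_pow_mul_exp_neg_abs, Finset.mul_sum,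
    ← Finset.sum_filter_of_ne fun a _ ha ↦ by_contra fun h ↦ ha (by rw [hodd a h, mul_zero]),
    ← Finset.map_nsmul_piAntidiag_univ k two_ne_zero, Finset.sum_map]
  exact Finset.sum_congr rfl heven

theorem card_piAntidiag_univ (k : ℕ) :
    (Finset.piAntidiag (Finset.univ : Finset ι) k).card = (Fintype.card ι).multichoose k := by
  rw [← Finset.map_sym_eq_piAntidiag, Finset.card_map, Finset.sym_univ, Finset.card_univ,
    Sym.card_sym_eq_multichoose]

theorem sum_piAntidiag_prod_pow_le {θ : ι → ℝ} {M : ℝ} (hθ : ∀ i, |θ i| ≤ M)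
    (k : ℕ) :
    ∑ b ∈ Finset.piAntidiag Finset.univ k, ∏ i, θ i ^ (2 * b i) ≤
      (Fintype.card ι).multichoose k * M ^ (2 * k) := by
  rw [← card_piAntidiag_univ k, ← nsmul_eq_mul]
  refine Finset.sum_le_card_nsmul _ _ _ fun b hb ↦ ?_
  calc ∏ i, θ i ^ (2 * b i) ≤ ∏ i, M ^ (2 * b i) := by
        refine Finset.prod_le_prod (fun i _ ↦ (even_two_mul _).pow_nonneg _) fun i _ ↦ ?_
        rw [← (even_two_mul _).pow_abs]
        exact pow_le_pow_left₀ (abs_nonneg _) (hθ i) _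
    _ = M ^ (2 * k) := by
        rw [Finset.prod_pow_eq_pow_sum, ← Finset.mul_sum, (Finset.mem_piAntidiag.1 hb).1]
end

theorem pow_mul_multichoose_mul_factorial_le (n k : ℕ) :
    n ^ k * (n.multichoose k * k ! * (n - 1)!) ≤ (n - 1 + 2 * k)! := by
  rcases n with _ | m
  · cases k <;> simp
  have hfactorial : (m + 1).multichoose k * k ! * m ! = (m + k)! := by
    rw [Nat.multichoose_eq, Nat.add_right_comm, Nat.add_sub_cancel,
      ← Nat.choose_mul_factorial_mul_factorial (Nat.le_add_left k m), Nat.add_sub_cancel]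
  calc (m + 1) ^ k * ((m + 1).multichoose k * k ! * m !) ≤ (m + k + 1) ^ k * (m + k)! := by
        rw [hfactorial]
        gcongr
        lia
    _ ≤ (m + k + k)! := by
        rw [mul_comm]
        exact Nat.factorial_mul_pow_le_factorial
    _ = (m + 2 * k)! := by rw [two_mul, add_assoc]

section LOneBall

variable {n : ℕ}

theorem continuousLinearEquiv_image_closedBall_one :
    PiLp.continuousLinearEquiv 1 ℝ (fun _ : Fin n ↦ ℝ) '' closedBall 0 1 =
      {x | ∑ i, |x i| ≤ 1} := by
  ext x
  rw [ContinuousLinearEquiv.image_eq_preimage_symm]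
  simp [PiLp.norm_eq_of_L1]

theorem isBounded_setOf_sum_abs_le_one :
    Bornology.IsBounded {x : Fin n → ℝ | ∑ i, |x i| ≤ 1} := by
  rw [← continuousLinearEquiv_image_closedBall_one]
  exact ((isCompact_closedBall 0 1).image (ContinuousLinearEquiv.continuous _)).isBounded

variable [NeZero n] {μ : Measure (Fin n → ℝ)}

theorem IsConeMeasure.factorial_mul_integral_sum_mul_pow
    (hμ : IsConeMeasure {x : Fin n → ℝ | ∑ i, |x i| ≤ 1} μ) (θ : Fin n → ℝ) (k : ℕ) :
    (n - 1 + 2 * k)! * ∫ x, (∑ i, x i * θ i) ^ (2 * k) ∂μ =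
      (n - 1)! * (2 * k)! *
        ∑ b ∈ Finset.piAntidiag Finset.univ k, ∏ i, θ i ^ (2 * b i) := by
  have := hμ.1
  rw [← continuousLinearEquiv_image_closedBall_one] at hμ
  set L := PiLp.continuousLinearEquiv 1 ℝ (fun _ : Fin n ↦ ℝ)
  set V := n * volume.real (L '' closedBall 0 1)
  have hmoment (j : ℕ) : 2 ^ n * (2 * j)! *
        ∑ b ∈ Finset.piAntidiag Finset.univ j, ∏ i, θ i ^ (2 * b i) =
      V * (n - 1 + 2 * j)! * ∫ x, (∑ i, x i * θ i) ^ (2 * j) ∂μ := by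
    have h := hμ.integral_homogeneous_mul_exp_neg_norm
      (g := fun x ↦ (∑ i, x i * θ i) ^ (2 * j)) (p := 2 * j) fun r _ x ↦ by
        simp only [Pi.smul_apply, smul_eq_mul, mul_assoc, ← Finset.mul_sum, mul_pow]
    have hnorm (x : Fin n → ℝ) : ‖L.symm x‖ = ∑ i, |x i| := by
      simp [L, PiLp.norm_eq_of_L1]
    simpa only [hnorm, integral_sum_mul_pow_mul_exp_neg_sum_abs, Fintype.card_fin] using h
  have hmass : 2 ^ n = V * (n - 1)! := by simpa using hmoment 0
  have hV : V ≠ 0 := left_ne_zero_of_mul (hmass ▸ pow_ne_zero n two_ne_zero)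
  refine mul_left_cancel₀ hV ?_
  rw [← mul_assoc, ← hmoment k, hmass]
  ring

theorem IsConeMeasure.integral_sum_mul_pow_le
    (hμ : IsConeMeasure {x : Fin n → ℝ | ∑ i, |x i| ≤ 1} μ) {θ : Fin n → ℝ} {M : ℝ}
    (hθ : ∀ i, |θ i| ≤ M) (k : ℕ) :
    ∫ x, (∑ i, x i * θ i) ^ (2 * k) ∂μ ≤ (2 * k)! / k ! * (M ^ 2 / n) ^ k := by
  have hn : (0 : ℝ) < n := Nat.cast_pos.2 (NeZero.pos n)
  have hcount : (n : ℝ) ^ k * (n.multichoose k * k ! * (n - 1)!) ≤ (n - 1 + 2 * k)! := by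
    exact_mod_cast pow_mul_multichoose_mul_factorial_le n k
  refine le_of_mul_le_mul_left ?_ (Nat.cast_pos.2 (n - 1 + 2 * k).factorial_pos)
  calc ((n - 1 + 2 * k)! : ℝ) * ∫ x, (∑ i, x i * θ i) ^ (2 * k) ∂μ
      = (n - 1)! * (2 * k)! *
          ∑ b ∈ Finset.piAntidiag Finset.univ k, ∏ i, θ i ^ (2 * b i) :=
        hμ.factorial_mul_integral_sum_mul_pow θ k
    _ ≤ (n - 1)! * (2 * k)! * (n.multichoose k * M ^ (2 * k)) := by
        gcongr
        simpa only [Fintype.card_fin] using sum_piAntidiag_prod_pow_le hθ k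
    _ = (n ^ k * (n.multichoose k * k ! * (n - 1)!)) * ((2 * k)! / k ! * (M ^ 2 / n) ^ k) := by
        rw [div_pow, pow_mul]
        field_simp
    _ ≤ (n - 1 + 2 * k)! * ((2 * k)! / k ! * (M ^ 2 / n) ^ k) := by gcongr

end LOneBall

/-- `ψ₂`-estimate for linear functionals with respect to the cone measure on the
boundary of the unit `ℓ¹`-ball: `√n·‖⟨·,θ⟩‖_{ψ₂} ≤ √6·‖θ‖_∞`. -/
theorem psi2_bound_cone_measure_l1_ball (n : ℕ) (hn : 1 ≤ n) (θ : Fin n → ℝ)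
    (μ : Measure (Fin n → ℝ))
    (hμ : IsConeMeasure {x : Fin n → ℝ | ∑ i, |x i| ≤ 1} μ) :
    Real.sqrt n * psi2Norm μ (fun x => ∑ i, x i * θ i) ≤
      Real.sqrt 6 * ⨆ i, |θ i| := by
  have : NeZero n := ⟨by lia⟩
  set M := ⨆ i, |θ i|
  have hM : 0 ≤ M := Real.iSup_nonneg fun i ↦ abs_nonneg (θ i)
  have hθ (i : Fin n) : |θ i| ≤ M := le_ciSup (finite_range fun i ↦ |θ i|).bddAbove i
  have hpsi2 : psi2Norm μ (fun x ↦ ∑ i, x i * θ i) ≤ √(6 * (M ^ 2 / n)) :=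
    psi2Norm_le_sqrt
      (fun _ ↦ hμ.integrable_of_continuous isBounded_setOf_sum_abs_le_one (by fun_prop))
      (hμ.integral_sum_mul_pow_le hθ) (by positivity)
  calc √n * psi2Norm μ (fun x ↦ ∑ i, x i * θ i) ≤ √n * √(6 * (M ^ 2 / n)) := by gcongr
    _ = √(6 * M ^ 2) := by
        rw [← sqrt_mul n.cast_nonneg]
        field_simp
    _ = √6 * M := by rw [sqrt_mul (by norm_num), sqrt_sq hM]
end

section
/- Let P ⊂ ℝⁿ be a symmetric polytope. Then (1/|P|) ∫_P ‖x‖₁ dx ≤ ((1+√2)/n) · max ‖ε₁y₁ + … + εₙyₙ‖₁, where the maximum is over all facets conv{y₁,…,yₙ} of P (with vertices y₁,…,yₙ) and all sign choices ε₁,…,εₙ ∈ {−1,+1}. -/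
open MeasureTheory

/-- `F` is a facet of the polytope `P ⊂ ℝⁿ`: a proper nonempty exposed face whose
affine span has dimension `n − 1`. -/
def IsFacet {n : ℕ} (P F : Set (Fin n → ℝ)) : Prop :=
  IsExposed ℝ P F ∧ F ≠ P ∧ F.Nonempty ∧
    Module.finrank ℝ (affineSpan ℝ F).direction = n - 1

/-!
The pyramids with apex `0` over the facets tile `P` up to null sets, so it suffices to bound the
integral of `‖x‖₁` over the pyramid of a facet `conv{y₁, …, yₙ}`. That pyramid is the image of the
solid simplex under `w ↦ ∑ wᵢ yᵢ`, and Dirichlet's formula gives the mean of `ℓ(x) ^ 2` over it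
for a linear functional `ℓ` exactly: it is `(∑ ℓ(yᵢ) ^ 2 + (∑ ℓ(yᵢ)) ^ 2) / ((n + 1) (n + 2))`.
By Jensen the mean of `|ℓ(x)|` is at most `(√(∑ ℓ(yᵢ) ^ 2) + |∑ ℓ(yᵢ)|) / (n + 1)`. Summed over the
coordinates, the second term is the norm of a signed sum, and the first is at most `√2` times an
average of such norms by Khintchine's inequality with the sharp constant, which comes from a
Poincaré inequality on the discrete cube (Latała–Oleszkiewicz).
-/

open scoped ENNReal Nat

section Cube

variable {ι : Type*}

/-- The Rademacher sign of a Boolean: signs `ε ∈ {-1, 1}^ι` are encoded as functions `ι → Bool`. -/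
def boolSign (b : Bool) : ℝ := if b then 1 else -1

/-- The antipode `-ε` of a sign vector. -/
def antipode (ε : ι → Bool) : ι → Bool := fun i ↦ !ε i

/-- The Walsh function `w_S(ε) = ∏_{i ∈ S} ε_i`. -/
def walsh (S : Finset ι) (ε : ι → Bool) : ℝ := ∏ i ∈ S, boolSign (ε i)

@[simp]
lemma boolSign_not (b : Bool) : boolSign (!b) = -boolSign b := by cases b <;> simp [boolSign]

lemma boolSign_mul_self (b : Bool) : boolSign b * boolSign b = 1 := by cases b <;> simp [boolSign]

lemma antipode_involutive : Function.Involutive (antipode : (ι → Bool) → ι → Bool) :=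
  fun ε ↦ by ext; simp [antipode]

lemma sum_walsh_mul_walsh [Fintype ι] (ε δ : ι → Bool) :
    ∑ S, walsh S ε * walsh S δ = if ε = δ then 2 ^ Fintype.card ι else 0 := by
  have expand : ∑ S, walsh S ε * walsh S δ = ∏ i, (1 + boolSign (ε i) * boolSign (δ i)) := by
    simp only [Finset.prod_one_add, Finset.powerset_univ, walsh, Finset.prod_mul_distrib]
  rw [expand]
  split_ifs with h
  · subst h
    simp only [boolSign_mul_self, Finset.prod_const, Finset.card_univ]
    norm_num
  · obtain ⟨i, hi⟩ := Function.ne_iff.mp h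
    refine Finset.prod_eq_zero (Finset.mem_univ i) ?_
    rw [Bool.eq_not_of_ne hi, boolSign_not, neg_mul, boolSign_mul_self, add_neg_cancel]

variable [DecidableEq ι]

/-- The neighbour of a sign vector along the `i`-th edge of the discrete cube. -/
def flipAt (i : ι) (ε : ι → Bool) : ι → Bool := Function.update ε i (!ε i)

lemma flipAt_involutive (i : ι) : Function.Involutive (flipAt i) :=
  fun ε ↦ by simp [flipAt]

lemma walsh_flipAt (S : Finset ι) (i : ι) (ε : ι → Bool) :
    walsh S (flipAt i ε) = (if i ∈ S then -1 else 1) * walsh S ε := by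
  have factor (j : ι) :
      boolSign (flipAt i ε j) = (if i = j then -1 else 1) * boolSign (ε j) := by
    rcases eq_or_ne i j with rfl | hij
    · simp [flipAt]
    · simp [flipAt, hij, hij.symm]
  simp only [walsh, factor, Finset.prod_mul_distrib, Finset.prod_ite_eq]

variable [Fintype ι]

lemma sum_comp_antipode (f : (ι → Bool) → ℝ) : ∑ ε, f (antipode ε) = ∑ ε, f ε :=
  antipode_involutive.bijective.sum_comp f

lemma sum_comp_flipAt (i : ι) (f : (ι → Bool) → ℝ) : ∑ ε, f (flipAt i ε) = ∑ ε, f ε :=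
  (flipAt_involutive i).bijective.sum_comp f

/-- The Walsh–Fourier coefficient of `f` at `S`, without the normalisation `2⁻ⁿ`. -/
def walshCoeff (f : (ι → Bool) → ℝ) (S : Finset ι) : ℝ := ∑ ε, f ε * walsh S ε

/-- The Laplacian of the discrete cube, scaled so that `w_S` has eigenvalue `#S`. -/
noncomputable def cubeLaplacian (f : (ι → Bool) → ℝ) (ε : ι → Bool) : ℝ :=
  (∑ i, (f ε - f (flipAt i ε))) / 2

theorem sum_walshCoeff_mul_walshCoeff (f g : (ι → Bool) → ℝ) :
    ∑ S, walshCoeff f S * walshCoeff g S = 2 ^ Fintype.card ι * ∑ ε, f ε * g ε := by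
  calc ∑ S, walshCoeff f S * walshCoeff g S
      = ∑ S, ∑ ε, ∑ δ, f ε * g δ * (walsh S ε * walsh S δ) := by
        simp only [walshCoeff, Finset.sum_mul_sum, mul_mul_mul_comm]
    _ = ∑ ε, ∑ δ, f ε * g δ * ∑ S, walsh S ε * walsh S δ := by
        rw [Finset.sum_comm]
        simp only [Finset.mul_sum, Finset.sum_comm (s := (Finset.univ : Finset (Finset ι)))]
    _ = 2 ^ Fintype.card ι * ∑ ε, f ε * g ε := by
        simp only [sum_walsh_mul_walsh, mul_ite, mul_zero, Finset.sum_ite_eq, Finset.mem_univ,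
          if_true, mul_comm _ ((2 : ℝ) ^ _), Finset.mul_sum]

lemma walshCoeff_empty (f : (ι → Bool) → ℝ) : walshCoeff f ∅ = ∑ ε, f ε := by
  simp [walshCoeff, walsh]

lemma walshCoeff_singleton_of_even {f : (ι → Bool) → ℝ} (hf : ∀ ε, f (antipode ε) = f ε)
    (i : ι) : walshCoeff f {i} = 0 := by
  have key := sum_comp_antipode fun ε ↦ f ε * walsh {i} ε
  simp only [hf, walsh, antipode, Finset.prod_singleton, boolSign_not, mul_neg,
    Finset.sum_neg_distrib] at key
  simp only [walshCoeff, walsh, Finset.prod_singleton]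
  linarith

lemma walshCoeff_comp_flipAt (f : (ι → Bool) → ℝ) (i : ι) (S : Finset ι) :
    walshCoeff (fun ε ↦ f (flipAt i ε)) S = (if i ∈ S then -1 else 1) * walshCoeff f S := by
  rw [walshCoeff, ← sum_comp_flipAt i, walshCoeff, Finset.mul_sum]
  refine Finset.sum_congr rfl fun ε _ ↦ ?_
  rw [flipAt_involutive i ε, walsh_flipAt, mul_left_comm]

lemma walshCoeff_cubeLaplacian (f : (ι → Bool) → ℝ) (S : Finset ι) :
    walshCoeff (cubeLaplacian f) S = S.card * walshCoeff f S := by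
  calc walshCoeff (cubeLaplacian f) S
      = (∑ i, (walshCoeff f S - walshCoeff (fun ε ↦ f (flipAt i ε)) S)) / 2 := by
        simp only [walshCoeff, cubeLaplacian, ← Finset.sum_sub_distrib, ← sub_mul,
          div_mul_eq_mul_div, Finset.sum_mul, ← Finset.sum_div]
        rw [Finset.sum_comm]
    _ = (∑ i, if i ∈ S then 2 * walshCoeff f S else 0) / 2 := by
        congr 1
        refine Finset.sum_congr rfl fun i _ ↦ ?_
        rw [walshCoeff_comp_flipAt]
        split_ifs <;> ring
    _ = S.card * walshCoeff f S := by
        rw [← Finset.sum_filter, Finset.filter_univ_mem, Finset.sum_const, nsmul_eq_mul]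
        ring

-- An even function has no Walsh coefficients of degree one, which doubles the spectral gap.
theorem poincare_inequality_of_even {f : (ι → Bool) → ℝ} (hf : ∀ ε, f (antipode ε) = f ε) :
    2 * (2 ^ Fintype.card ι * ∑ ε, f ε ^ 2 - (∑ ε, f ε) ^ 2) ≤
      2 ^ Fintype.card ι * ∑ ε, f ε * cubeLaplacian f ε := by
  have spectral (S : Finset ι) :
      2 * (walshCoeff f S * walshCoeff f S - if S = ∅ then (∑ ε, f ε) ^ 2 else 0) ≤
        walshCoeff f S * walshCoeff (cubeLaplacian f) S := by
    rw [walshCoeff_cubeLaplacian]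
    rcases lt_or_ge S.card 2 with hS | hS
    · interval_cases h : S.card
      · simp [Finset.card_eq_zero.mp h, walshCoeff_empty, sq]
      · obtain ⟨i, rfl⟩ := Finset.card_eq_one.mp h
        simp [walshCoeff_singleton_of_even hf]
    · have hcard : (2 : ℝ) ≤ S.card := by exact_mod_cast hS
      rw [if_neg (by rintro rfl; simp at hS)]
      nlinarith [mul_self_nonneg (walshCoeff f S)]
  have total := Finset.sum_le_sum fun S (_ : S ∈ Finset.univ) ↦ spectral S
  simpa [← Finset.mul_sum, Finset.sum_sub_distrib, sum_walshCoeff_mul_walshCoeff, sq] using total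

end Cube

section Rademacher

variable {ι : Type*} [Fintype ι]

/-- The Rademacher sum `∑ ε_i v_i`. -/
noncomputable def rademacherSum {V : Type*} [AddCommGroup V] [Module ℝ V] (v : ι → V)
    (ε : ι → Bool) : V :=
  ∑ i, boolSign (ε i) • v i

lemma rademacherSum_apply {κ : Type*} (v : ι → κ → ℝ) (ε : ι → Bool) (j : κ) :
    rademacherSum v ε j = ∑ i, (if ε i then 1 else -1) * v i j := by
  simp only [rademacherSum, boolSign, Finset.sum_apply, Pi.smul_apply, smul_eq_mul]

lemma rademacherSum_antipode {V : Type*} [AddCommGroup V] [Module ℝ V] (v : ι → V)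
    (ε : ι → Bool) : rademacherSum v (antipode ε) = -rademacherSum v ε := by
  simp [rademacherSum, antipode]

variable [DecidableEq ι]

lemma rademacherSum_flipAt {V : Type*} [AddCommGroup V] [Module ℝ V] (v : ι → V) (i : ι)
    (ε : ι → Bool) :
    rademacherSum v (flipAt i ε) = rademacherSum v ε - (2 : ℝ) • boolSign (ε i) • v i := by
  have diff : rademacherSum v ε - rademacherSum v (flipAt i ε) =
      (2 : ℝ) • boolSign (ε i) • v i := by
    rw [rademacherSum, rademacherSum, ← Finset.sum_sub_distrib,
      Fintype.sum_eq_single i fun j hj ↦ by simp [flipAt, hj]]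
    simp [flipAt, two_smul]
  rw [← diff, sub_sub_cancel]

variable {V : Type*} [SeminormedAddCommGroup V] [NormedSpace ℝ V]

lemma cubeLaplacian_norm_rademacherSum_le (v : ι → V) (ε : ι → Bool) :
    cubeLaplacian (fun δ ↦ ‖rademacherSum v δ‖) ε ≤ ‖rademacherSum v ε‖ := by
  have neighbours : ∑ i, rademacherSum v (flipAt i ε) =
      (Fintype.card ι - 2 : ℝ) • rademacherSum v ε := by
    simp only [rademacherSum_flipAt, Finset.sum_sub_distrib, ← Finset.smul_sum, Finset.sum_const,
      Finset.card_univ, ← Nat.cast_smul_eq_nsmul ℝ, sub_smul]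
    rfl
  have lower : (Fintype.card ι - 2 : ℝ) * ‖rademacherSum v ε‖ ≤
      ∑ i, ‖rademacherSum v (flipAt i ε)‖ :=
    calc (Fintype.card ι - 2 : ℝ) * ‖rademacherSum v ε‖
        ≤ |(Fintype.card ι - 2 : ℝ)| * ‖rademacherSum v ε‖ := by gcongr; exact le_abs_self _
      _ = ‖∑ i, rademacherSum v (flipAt i ε)‖ := by rw [neighbours, norm_smul, Real.norm_eq_abs]
      _ ≤ ∑ i, ‖rademacherSum v (flipAt i ε)‖ := norm_sum_le _ _
  simp only [cubeLaplacian, Finset.sum_sub_distrib, Finset.sum_const, Finset.card_univ,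
    nsmul_eq_mul]
  linarith

theorem kahane_inequality (v : ι → V) :
    2 ^ Fintype.card ι * ∑ ε, ‖rademacherSum v ε‖ ^ 2 ≤ 2 * (∑ ε, ‖rademacherSum v ε‖) ^ 2 := by
  have poincare := poincare_inequality_of_even (f := fun ε ↦ ‖rademacherSum v ε‖)
    fun ε ↦ by rw [rademacherSum_antipode, norm_neg]
  have energy : ∑ ε, ‖rademacherSum v ε‖ * cubeLaplacian (fun δ ↦ ‖rademacherSum v δ‖) ε ≤
      ∑ ε, ‖rademacherSum v ε‖ ^ 2 := by
    gcongr with ε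
    rw [sq]
    gcongr
    exact cubeLaplacian_norm_rademacherSum_le v ε
  have energy' := mul_le_mul_of_nonneg_left energy (by positivity : (0 : ℝ) ≤ 2 ^ Fintype.card ι)
  linarith

lemma sum_boolSign_mul_boolSign (i j : ι) :
    ∑ ε : ι → Bool, boolSign (ε i) * boolSign (ε j) = if i = j then 2 ^ Fintype.card ι else 0 := by
  split_ifs with h
  · subst h
    simp [boolSign_mul_self]
  · have key := sum_comp_flipAt i fun ε : ι → Bool ↦ boolSign (ε i) * boolSign (ε j)
    simp only [flipAt, Function.update_self, Function.update_of_ne (Ne.symm h), boolSign_not,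
      neg_mul, Finset.sum_neg_distrib] at key
    linarith

lemma sum_rademacherSum_sq (a : ι → ℝ) :
    ∑ ε, rademacherSum a ε ^ 2 = 2 ^ Fintype.card ι * ∑ i, a i ^ 2 := by
  calc ∑ ε, rademacherSum a ε ^ 2
      = ∑ ε : ι → Bool, ∑ i, ∑ j, a i * a j * (boolSign (ε i) * boolSign (ε j)) := by
        refine Finset.sum_congr rfl fun ε _ ↦ ?_
        simp only [rademacherSum, sq, Finset.sum_mul_sum, smul_eq_mul]
        exact Finset.sum_congr rfl fun i _ ↦ Finset.sum_congr rfl fun j _ ↦ by ring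
    _ = ∑ i, ∑ j, a i * a j * ∑ ε : ι → Bool, boolSign (ε i) * boolSign (ε j) := by
        rw [Finset.sum_comm]
        simp only [Finset.mul_sum, Finset.sum_comm (s := (Finset.univ : Finset (ι → Bool)))]
    _ = 2 ^ Fintype.card ι * ∑ i, a i ^ 2 := by
        simp [sum_boolSign_mul_boolSign, Finset.mul_sum, sq, mul_comm]

theorem khintchine_inequality (a : ι → ℝ) :
    √(∑ i, a i ^ 2) ≤ √2 * ((∑ ε, |rademacherSum a ε|) / 2 ^ Fintype.card ι) := by
  have kahane := kahane_inequality a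
  simp only [Real.norm_eq_abs, sq_abs, sum_rademacherSum_sq] at kahane
  refine Real.sqrt_le_iff.mpr ⟨by positivity, ?_⟩
  rw [mul_pow, Real.sq_sqrt zero_le_two, div_pow, ← mul_div_assoc, le_div_iff₀ (by positivity)]
  linarith

end Rademacher

section Homogeneous

lemma integrableOn_exp_neg_mul_pow (k : ℕ) :
    IntegrableOn (fun t : ℝ ↦ Real.exp (-t) * t ^ k) (Set.Ioi 0) := by
  simpa using Real.GammaIntegral_convergent (s := k + 1) (by positivity)

lemma integral_exp_neg_mul_pow (k : ℕ) :
    ∫ t in Set.Ioi (0 : ℝ), Real.exp (-t) * t ^ k = k ! := by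
  simpa [Real.Gamma_nat_eq_factorial] using
    (Real.Gamma_eq_integral (s := k + 1) (by positivity)).symm

lemma lintegral_exp_neg_mul_pow (k : ℕ) :
    ∫⁻ t in Set.Ioi (0 : ℝ), ENNReal.ofReal (Real.exp (-t) * t ^ k) = (k ! : ℝ≥0∞) := by
  rw [← ofReal_integral_eq_lintegral_ofReal (integrableOn_exp_neg_mul_pow k),
    integral_exp_neg_mul_pow, ENNReal.ofReal_natCast]
  filter_upwards [ae_restrict_mem measurableSet_Ioi] with t ht
  exact mul_nonneg (Real.exp_pos _).le (pow_nonneg (le_of_lt ht) k)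

lemma ofReal_exp_neg_eq_lintegral {s : ℝ} (hs : 0 ≤ s) :
    ENNReal.ofReal (Real.exp (-s)) =
      ∫⁻ t in Set.Ioi 0, (Set.Ici s).indicator (fun t ↦ ENNReal.ofReal (Real.exp (-t))) t := by
  have tail : (Set.Ici s ∩ Set.Ioi 0 : Set ℝ) =ᵐ[volume] Set.Ioi s := by
    rw [← Set.inter_eq_left.mpr (Set.Ioi_subset_Ioi hs)]
    exact Ioi_ae_eq_Ici.symm.inter (ae_eq_refl _)
  rw [setLIntegral_indicator measurableSet_Ici, setLIntegral_congr tail, ← integral_exp_neg_Ioi,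
    ofReal_integral_eq_lintegral_ofReal (integrableOn_exp_neg_Ioi s)]
  exact Filter.Eventually.of_forall fun t ↦ (Real.exp_pos _).le

variable {E : Type*} [NormedAddCommGroup E] [NormedSpace ℝ E] [MeasurableSpace E] [BorelSpace E]
  [FiniteDimensional ℝ E] (μ : Measure E) [μ.IsAddHaarMeasure] {F : E → ℝ≥0∞} {g : E → ℝ} {d : ℕ}

lemma setLIntegral_le_of_homogeneous (hFm : Measurable F) (hgm : Measurable g)
    (hg : ∀ r > 0, ∀ x, g (r • x) = r * g x)
    (hF : ∀ r > 0, ∀ x, F (r • x) = ENNReal.ofReal (r ^ d) * F x) {r : ℝ} (hr : 0 < r) :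
    ∫⁻ x in {x | g x ≤ r}, F x ∂μ =
      ENNReal.ofReal (r ^ (Module.finrank ℝ E + d)) * ∫⁻ x in {x | g x ≤ 1}, F x ∂μ := by
  have scaled : (r⁻¹ • · : E → E) ⁻¹' {x | g x ≤ 1} = {x | g x ≤ r} := by
    ext x
    simp only [Set.mem_preimage, Set.mem_ofPred_eq, hg _ (inv_pos.mpr hr),
      inv_mul_le_iff₀ hr, mul_one]
  have level : MeasurableSet {x | g x ≤ 1} := hgm measurableSet_Iic
  have pushforward : μ.map (r⁻¹ • ·) = ENNReal.ofReal (r ^ Module.finrank ℝ E) • μ := by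
    rw [Measure.map_addHaar_smul μ (inv_ne_zero hr.ne'), inv_pow, inv_inv,
      abs_of_pos (by positivity)]
  calc ∫⁻ x in {x | g x ≤ r}, F x ∂μ
      = ∫⁻ x in {x | g x ≤ r}, ENNReal.ofReal (r ^ d) * F (r⁻¹ • x) ∂μ := by
        simp only [← hF r hr, smul_inv_smul₀ hr.ne']
    _ = ∫⁻ x in {x | g x ≤ 1}, ENNReal.ofReal (r ^ d) * F x ∂μ.map (r⁻¹ • ·) := by
        rw [setLIntegral_map level (hFm.const_mul _) (measurable_const_smul _),
          scaled]
    _ = ENNReal.ofReal (r ^ (Module.finrank ℝ E + d)) * ∫⁻ x in {x | g x ≤ 1}, F x ∂μ := by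
        rw [pushforward, Measure.restrict_smul, lintegral_smul_measure, lintegral_const_mul _ hFm,
          smul_eq_mul, ← mul_assoc, pow_add, ENNReal.ofReal_mul (by positivity)]

theorem lintegral_mul_exp_neg_of_homogeneous (hFm : Measurable F) (hgm : Measurable g)
    (hg0 : 0 ≤ g) (hg : ∀ r > 0, ∀ x, g (r • x) = r * g x)
    (hF : ∀ r > 0, ∀ x, F (r • x) = ENNReal.ofReal (r ^ d) * F x) :
    ∫⁻ x, F x * ENNReal.ofReal (Real.exp (-g x)) ∂μ =
      (Module.finrank ℝ E + d)! * ∫⁻ x in {x | g x ≤ 1}, F x ∂μ := by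
  have level : MeasurableSet {p : E × ℝ | g p.1 ≤ p.2} :=
    measurableSet_le (hgm.comp measurable_fst) measurable_snd
  have hmeas : Measurable fun p : E × ℝ ↦ F p.1 * {p : E × ℝ | g p.1 ≤ p.2}.indicator
      (fun p ↦ ENNReal.ofReal (Real.exp (-p.2))) p :=
    (hFm.comp measurable_fst).mul (Measurable.indicator (by fun_prop) level)
  calc ∫⁻ x, F x * ENNReal.ofReal (Real.exp (-g x)) ∂μ
      = ∫⁻ x, ∫⁻ t in Set.Ioi 0, F x * (Set.Ici (g x)).indicator
          (fun t ↦ ENNReal.ofReal (Real.exp (-t))) t ∂volume ∂μ := by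
        refine lintegral_congr fun x ↦ ?_
        rw [ofReal_exp_neg_eq_lintegral (hg0 x), lintegral_const_mul]
        exact Measurable.indicator (by fun_prop) measurableSet_Ici
    _ = ∫⁻ t in Set.Ioi (0 : ℝ), ∫⁻ x, F x * (Set.Ici (g x)).indicator
          (fun t ↦ ENNReal.ofReal (Real.exp (-t))) t ∂μ :=
        lintegral_lintegral_swap hmeas.aemeasurable
    _ = ∫⁻ t in Set.Ioi (0 : ℝ),
          ENNReal.ofReal (Real.exp (-t)) * ∫⁻ x in {x | g x ≤ t}, F x ∂μ := by
        refine lintegral_congr fun t ↦ ?_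
        have level_t : MeasurableSet {x | g x ≤ t} := hgm measurableSet_Iic
        rw [← lintegral_indicator level_t, ← lintegral_const_mul _ (hFm.indicator level_t)]
        refine lintegral_congr fun x ↦ ?_
        by_cases h : g x ≤ t <;> simp [h, mul_comm]
    _ = ∫⁻ t in Set.Ioi (0 : ℝ), ENNReal.ofReal (Real.exp (-t) * t ^ (Module.finrank ℝ E + d)) *
          ∫⁻ x in {x | g x ≤ 1}, F x ∂μ := by
        refine setLIntegral_congr_fun measurableSet_Ioi fun t ht ↦ ?_
        simp only [setLIntegral_le_of_homogeneous μ hFm hgm hg hF ht, ← mul_assoc,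
          ENNReal.ofReal_mul (Real.exp_pos _).le]
    _ = (Module.finrank ℝ E + d)! * ∫⁻ x in {x | g x ≤ 1}, F x ∂μ := by
        rw [lintegral_mul_const _ (by fun_prop), lintegral_exp_neg_mul_pow]

end Homogeneous

section SolidSimplex

variable {ι : Type*} [Fintype ι]

variable (ι) in
/-- The solid simplex `conv{0, e_1, …, e_n}`. -/
def solidSimplex : Set (ι → ℝ) := {x | 0 ≤ x ∧ ∑ i, x i ≤ 1}

lemma isCompact_solidSimplex : IsCompact (solidSimplex ι) := by
  refine (isCompact_Icc (a := (0 : ι → ℝ)) (b := 1)).of_isClosed_subset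
    (isClosed_Ici.inter (isClosed_le (continuous_finsetSum _ fun i _ ↦ continuous_apply i)
      continuous_const)) fun x hx ↦ ⟨hx.1, fun i ↦ ?_⟩
  exact (Finset.single_le_sum (fun j _ ↦ hx.1 j) (Finset.mem_univ i)).trans hx.2

lemma lintegral_orthant_mul_exp_neg {f : (ι → ℝ) → ℝ≥0∞} {d : ℕ} (hfm : Measurable f)
    (hf : ∀ r > 0, ∀ x, f (r • x) = ENNReal.ofReal (r ^ d) * f x) :
    ∫⁻ x in Set.Ici 0, f x * ENNReal.ofReal (Real.exp (-∑ i, x i)) =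
      (Fintype.card ι + d)! * ∫⁻ x in solidSimplex ι, f x := by
  have norm_eq {x : ι → ℝ} (hx : x ∈ Set.Ici 0) : ∑ i, |x i| = ∑ i, x i :=
    Finset.sum_congr rfl fun i _ ↦ abs_of_nonneg (hx i)
  have orthant_cone {r : ℝ} (hr : 0 < r) (x : ι → ℝ) : r • x ∈ Set.Ici 0 ↔ x ∈ Set.Ici 0 := by
    simp [Pi.le_def, hr]
  have domain : Set.Ici 0 ∩ {x : ι → ℝ | ∑ i, |x i| ≤ 1} = solidSimplex ι := by
    ext x
    refine and_congr_right fun hx ↦ ?_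
    rw [Set.mem_ofPred_eq, norm_eq hx]
  calc ∫⁻ x in Set.Ici 0, f x * ENNReal.ofReal (Real.exp (-∑ i, x i))
      = ∫⁻ x, (Set.Ici 0).indicator f x * ENNReal.ofReal (Real.exp (-∑ i, |x i|)) := by
        rw [← lintegral_indicator measurableSet_Ici]
        refine lintegral_congr fun x ↦ ?_
        by_cases hx : x ∈ Set.Ici 0
        · rw [Set.indicator_of_mem hx, Set.indicator_of_mem hx, norm_eq hx]
        · rw [Set.indicator_of_notMem hx, Set.indicator_of_notMem hx, zero_mul]
    _ = (Fintype.card ι + d)! * ∫⁻ x in {x | ∑ i, |x i| ≤ 1}, (Set.Ici 0).indicator f x := by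
        rw [← Module.finrank_fintype_fun_eq_card ℝ]
        refine lintegral_mul_exp_neg_of_homogeneous volume (hfm.indicator measurableSet_Ici)
          (by fun_prop) (fun x ↦ Finset.sum_nonneg fun i _ ↦ abs_nonneg (x i))
          (fun r hr x ↦ by simp [abs_mul, abs_of_pos hr, Finset.mul_sum]) fun r hr x ↦ ?_
        by_cases hx : x ∈ Set.Ici 0
        · rw [Set.indicator_of_mem hx, Set.indicator_of_mem ((orthant_cone hr x).mpr hx), hf r hr]
        · rw [Set.indicator_of_notMem hx,
            Set.indicator_of_notMem ((orthant_cone hr x).not.mpr hx), mul_zero]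
    _ = (Fintype.card ι + d)! * ∫⁻ x in solidSimplex ι, f x := by
        rw [setLIntegral_indicator measurableSet_Ici, domain]

lemma lintegral_orthant_prod_exp_neg_mul_pow (c : ι → ℕ) :
    ∫⁻ x in Set.Ici (0 : ι → ℝ), ENNReal.ofReal (∏ i, Real.exp (-x i) * x i ^ c i) =
      (∏ i, (c i)! : ℕ) := by
  have orthant : (volume : Measure (ι → ℝ)).restrict (Set.Ici 0) =
      Measure.pi fun _ ↦ volume.restrict (Set.Ioi 0) := by
    simp only [← Set.pi_univ_Ici, volume_pi, Measure.restrict_pi_pi, Pi.zero_apply,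
      Measure.restrict_congr_set Ioi_ae_eq_Ici]
  rw [← ofReal_integral_eq_lintegral_ofReal, orthant,
    integral_fintype_prod_eq_prod (fun i t ↦ Real.exp (-t) * t ^ c i)]
  · simp only [integral_exp_neg_mul_pow, ← Nat.cast_prod, ENNReal.ofReal_natCast]
  · rw [orthant]
    exact Integrable.fintype_prod fun i ↦ integrableOn_exp_neg_mul_pow (c i)
  · filter_upwards [ae_restrict_mem measurableSet_Ici] with x hx
    exact Finset.prod_nonneg fun i _ ↦ mul_nonneg (Real.exp_pos _).le (pow_nonneg (hx i) _)

theorem setIntegral_solidSimplex_prod_pow (c : ι → ℕ) :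
    ∫ x in solidSimplex ι, ∏ i, x i ^ c i = (∏ i, (c i)! : ℕ) / (Fintype.card ι + ∑ i, c i)! := by
  have dirichlet : ((∏ i, (c i)! : ℕ) : ℝ≥0∞) = (Fintype.card ι + ∑ i, c i)! *
      ∫⁻ x in solidSimplex ι, ENNReal.ofReal (∏ i, x i ^ c i) := by
    rw [← lintegral_orthant_prod_exp_neg_mul_pow, ← lintegral_orthant_mul_exp_neg (by fun_prop)]
    · refine lintegral_congr fun x ↦ ?_
      rw [← ENNReal.ofReal_mul' (Real.exp_pos _).le, ← Finset.sum_neg_distrib, Real.exp_sum,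
        ← Finset.prod_mul_distrib]
      simp only [mul_comm]
    · intro r hr x
      rw [← ENNReal.ofReal_mul (by positivity), ← Finset.prod_pow_eq_pow_sum,
        ← Finset.prod_mul_distrib]
      simp only [Pi.smul_apply, smul_eq_mul, mul_pow]
  rw [integral_eq_lintegral_of_nonneg_ae _ (Measurable.aestronglyMeasurable (by fun_prop)),
    eq_div_iff (by positivity), mul_comm]
  · simpa using congrArg ENNReal.toReal dirichlet.symm
  · filter_upwards [ae_restrict_mem isCompact_solidSimplex.measurableSet] with x hx
    exact Finset.prod_nonneg fun i _ ↦ pow_nonneg (hx.1 i) _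

lemma integrableOn_solidSimplex {f : (ι → ℝ) → ℝ} (hf : Continuous f) :
    IntegrableOn f (solidSimplex ι) :=
  hf.continuousOn.integrableOn_compact isCompact_solidSimplex

variable (ι) in
lemma volume_real_solidSimplex : volume.real (solidSimplex ι) = 1 / (Fintype.card ι)! := by
  simpa using setIntegral_solidSimplex_prod_pow (0 : ι → ℕ)

lemma setIntegral_solidSimplex_mul [DecidableEq ι] (i j : ι) :
    ∫ x in solidSimplex ι, x i * x j = (if i = j then 2 else 1) / (Fintype.card ι + 2)! := by
  have moment := setIntegral_solidSimplex_prod_pow (Pi.single i 1 + Pi.single j 1)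
  have numerator : ∏ k, ((Pi.single i 1 + Pi.single j 1 : ι → ℕ) k)! = if i = j then 2 else 1 := by
    split_ifs with h
    · subst h
      rw [Fintype.prod_eq_single i fun k hk ↦ by simp [hk]]
      simp
    · refine Finset.prod_eq_one fun k _ ↦ Nat.factorial_eq_one.mpr ?_
      simp only [Pi.add_apply, Pi.single_apply]
      grind
  have coordinate (x : ι → ℝ) (k : ι) : ∏ l, x l ^ (Pi.single k 1 : ι → ℕ) l = x k := by
    rw [Fintype.prod_eq_single k fun l hl ↦ by simp [hl]]
    simp
  rw [numerator] at moment
  simpa [pow_add, Finset.prod_mul_distrib, coordinate, Finset.sum_add_distrib]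
    using moment

theorem setIntegral_solidSimplex_sum_mul_sq (a : ι → ℝ) :
    ∫ x in solidSimplex ι, (∑ i, a i * x i) ^ 2 =
      (∑ i, a i ^ 2 + (∑ i, a i) ^ 2) / ((Fintype.card ι + 1) * (Fintype.card ι + 2)) *
        volume.real (solidSimplex ι) := by
  classical
  have integrable_mul (i j : ι) : IntegrableOn (fun x : ι → ℝ ↦ x i * x j) (solidSimplex ι) :=
    integrableOn_solidSimplex (by fun_prop)
  have factorial : ((Fintype.card ι + 2)! : ℝ) =
      (Fintype.card ι + 1) * (Fintype.card ι + 2) * (Fintype.card ι)! := by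
    push_cast [Nat.factorial_succ]
    ring
  calc ∫ x in solidSimplex ι, (∑ i, a i * x i) ^ 2
      = ∑ i, ∑ j, a i * a j * ∫ x in solidSimplex ι, x i * x j := by
        simp only [sq, Finset.sum_mul_sum, mul_mul_mul_comm, ← integral_const_mul]
        rw [integral_finsetSum _ fun i _ ↦ integrable_finsetSum _ fun j _ ↦
          (integrable_mul i j).const_mul _]
        exact Finset.sum_congr rfl fun i _ ↦
          integral_finsetSum _ fun j _ ↦ (integrable_mul i j).const_mul _
    _ = (∑ i, ∑ j, (a i * a j + if i = j then a i * a j else 0)) / (Fintype.card ι + 2)! := by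
        simp only [setIntegral_solidSimplex_mul, Finset.sum_div]
        refine Finset.sum_congr rfl fun i _ ↦ Finset.sum_congr rfl fun j _ ↦ ?_
        split_ifs <;> ring
    _ = (∑ i, a i ^ 2 + (∑ i, a i) ^ 2) / (Fintype.card ι + 2)! := by
        simp only [Finset.sum_add_distrib, Finset.sum_ite_eq, Finset.mem_univ, if_true, sq,
          Finset.sum_mul_sum, add_comm]
    _ = _ := by
        rw [volume_real_solidSimplex, factorial]
        field_simp

end SolidSimplex

section LinearImage

variable {E G : Type*} [NormedAddCommGroup E] [NormedSpace ℝ E] [MeasurableSpace E] [BorelSpace E]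
  [FiniteDimensional ℝ E] (μ : Measure E) [μ.IsAddHaarMeasure] [NormedAddCommGroup G]
  [NormedSpace ℝ G]

theorem setIntegral_image_linearMap (L : E →ₗ[ℝ] E) {s : Set E} (hs : MeasurableSet s)
    (f : E → G) : ∫ x in L '' s, f x ∂μ = |LinearMap.det L| • ∫ x in s, f (L x) ∂μ := by
  rcases eq_or_ne (LinearMap.det L) 0 with hdet | hdet
  · have null : μ (L '' s) = 0 := by simp [Measure.addHaar_image_linearMap, hdet]
    rw [setIntegral_measure_zero _ null, hdet, abs_zero, zero_smul]
  · rw [← integral_smul]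
    exact integral_image_eq_integral_abs_det_fderiv_smul μ hs
      (fun x _ ↦ L.toContinuousLinearMap.hasFDerivWithinAt)
      (LinearMap.equivOfDetNeZero L hdet).injective.injOn f

end LinearImage

lemma integral_abs_le_of_integral_sq_le {α : Type*} {_ : MeasurableSpace α} {μ : Measure α}
    [IsFiniteMeasure μ] {f : α → ℝ} (hf : MemLp f 2 μ) {c : ℝ} (hc : 0 ≤ c)
    (h : ∫ x, f x ^ 2 ∂μ ≤ c ^ 2 * μ.real Set.univ) : ∫ x, |f x| ∂μ ≤ c * μ.real Set.univ := by
  rcases eq_or_ne μ 0 with rfl | hμ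
  · simp
  have : NeZero μ := ⟨hμ⟩
  have hpos : 0 < μ.real Set.univ := measureReal_univ_pos
  have jensen : (⨍ x, |f x| ∂μ) ^ 2 ≤ ⨍ x, |f x| ^ 2 ∂μ :=
    even_two.convexOn_pow.map_average_le (by fun_prop) isClosed_univ (by simp)
      (hf.integrable (by simp)).abs (by simpa [Function.comp_def] using hf.integrable_sq)
  simp only [sq_abs, average_eq, smul_eq_mul, inv_mul_eq_div] at jensen
  rw [← div_le_iff₀ hpos]
  exact abs_le_of_sq_le_sq' (jensen.trans ((div_le_iff₀ hpos).mpr h)) hc |>.2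

section Pyramid

/-- The pyramid with base `F` and apex at the origin. -/
def pyramid {V : Type*} [AddCommGroup V] [Module ℝ V] (F : Set V) : Set V :=
  convexHull ℝ (insert 0 F)

lemma isCompact_pyramid {V : Type*} [NormedAddCommGroup V] [NormedSpace ℝ V] {s : Set V}
    (hs : s.Finite) : IsCompact (pyramid s) :=
  (hs.insert 0).isCompact_convexHull ℝ

section Module

variable {ι V : Type*} [Fintype ι] [AddCommGroup V] [Module ℝ V]

lemma pyramid_convexHull (s : Set V) : pyramid (convexHull ℝ s) = pyramid s := by
  rw [pyramid, pyramid, Set.insert_eq, Set.insert_eq, convexHull_convexHull_union_right]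

lemma smul_mem_pyramid {F : Set V} {t : ℝ} (ht₀ : 0 ≤ t) (ht₁ : t ≤ 1) {x : V} (hx : x ∈ F) :
    t • x ∈ pyramid F :=
  (convex_convexHull ℝ _).smul_mem_of_zero_mem (subset_convexHull ℝ _ (Set.mem_insert 0 F))
    (subset_convexHull ℝ _ (Set.mem_insert_of_mem 0 hx)) ⟨ht₀, ht₁⟩

lemma pyramid_subset {F P : Set V} (hP : Convex ℝ P) (h0 : 0 ∈ P) (hF : F ⊆ P) : pyramid F ⊆ P :=
  convexHull_min (Set.insert_subset h0 hF) hP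

lemma le_of_mem_pyramid {F : Set V} {ℓ ℓ' : Module.Dual ℝ V} (h : ∀ x ∈ F, ℓ' x ≤ ℓ x) {x : V}
    (hx : x ∈ pyramid F) : ℓ' x ≤ ℓ x := by
  have := pyramid_subset (convex_halfSpace_le (ℓ' - ℓ).isLinear 0) (by simp)
    (fun y hy ↦ by simpa using h y hy) hx
  simpa using this

lemma convex_solidSimplex : Convex ℝ (solidSimplex ι) := by
  have hsum := convex_halfSpace_le (∑ i, LinearMap.proj i : (ι → ℝ) →ₗ[ℝ] ℝ).isLinear 1
  simp only [LinearMap.sum_apply, LinearMap.proj_apply] at hsum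
  exact (convex_Ici 0).inter hsum

lemma pyramid_range (y : ι → V) :
    pyramid (Set.range y) = Fintype.linearCombination ℝ y '' solidSimplex ι := by
  classical
  refine Set.Subset.antisymm (convexHull_min ?_ (convex_solidSimplex.linear_image _)) ?_
  · refine Set.insert_subset ⟨0, ⟨le_rfl, by simp⟩, map_zero _⟩ ?_
    refine Set.range_subset_iff.mpr fun i ↦ ?_
    exact ⟨Pi.single i 1, ⟨by simp, by simp⟩, by simp⟩
  · rintro _ ⟨x, hx, rfl⟩
    have combination := (convex_convexHull ℝ (insert 0 (Set.range y))).sum_mem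
      (t := Finset.univ) (w := fun o : Option ι ↦ o.elim (1 - ∑ i, x i) x)
      (z := fun o ↦ o.elim 0 y) ?_ (by simp) ?_
    · simpa [pyramid, Fintype.linearCombination_apply] using combination
    · rintro (_ | i) _
      exacts [sub_nonneg.mpr hx.2, hx.1 i]
    · rintro (_ | i) _
      exacts [subset_convexHull ℝ _ (Set.mem_insert 0 _),
        subset_convexHull ℝ _ (Set.mem_insert_of_mem _ (Set.mem_range_self i))]

end Module

variable {ι : Type*} [Fintype ι] (y : ι → ι → ℝ)

theorem setIntegral_pyramid_range {G : Type*} [NormedAddCommGroup G] [NormedSpace ℝ G]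
    (f : (ι → ℝ) → G) :
    ∫ x in pyramid (Set.range y), f x =
      |LinearMap.det (Fintype.linearCombination ℝ y)| •
        ∫ w in solidSimplex ι, f (∑ i, w i • y i) := by
  rw [pyramid_range]
  exact setIntegral_image_linearMap volume _ isCompact_solidSimplex.measurableSet f

theorem setIntegral_pyramid_range_sq (ℓ : Module.Dual ℝ (ι → ℝ)) :
    ∫ x in pyramid (Set.range y), ℓ x ^ 2 =
      (∑ i, ℓ (y i) ^ 2 + (∑ i, ℓ (y i)) ^ 2) / ((Fintype.card ι + 1) * (Fintype.card ι + 2)) *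
        volume.real (pyramid (Set.range y)) := by
  have hvol : volume.real (pyramid (Set.range y)) =
      |LinearMap.det (Fintype.linearCombination ℝ y)| * volume.real (solidSimplex ι) := by
    simpa using setIntegral_pyramid_range y fun _ ↦ (1 : ℝ)
  rw [setIntegral_pyramid_range, hvol, mul_left_comm, ← setIntegral_solidSimplex_sum_mul_sq]
  simp [mul_comm]

lemma add_sq_div_le_sq_sqrt_add_abs_div {a n : ℝ} (ha : 0 ≤ a) (b : ℝ) (hn : 0 ≤ n) :
    (a + b ^ 2) / ((n + 1) * (n + 2)) ≤ ((√a + |b|) / (n + 1)) ^ 2 := by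
  rw [div_pow, sq (n + 1)]
  gcongr
  · linarith [mul_nonneg (Real.sqrt_nonneg a) (abs_nonneg b), Real.sq_sqrt ha, sq_abs b,
      add_sq √a |b|]
  · norm_num

lemma integrableOn_pyramid_range {f : (ι → ℝ) → ℝ} (hf : Continuous f) :
    IntegrableOn f (pyramid (Set.range y)) :=
  hf.continuousOn.integrableOn_compact (isCompact_pyramid (Set.finite_range y))

theorem setIntegral_pyramid_range_abs_le (ℓ : Module.Dual ℝ (ι → ℝ)) :
    ∫ x in pyramid (Set.range y), |ℓ x| ≤
      (√(∑ i, ℓ (y i) ^ 2) + |∑ i, ℓ (y i)|) / (Fintype.card ι + 1) *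
        volume.real (pyramid (Set.range y)) := by
  have hcont : Continuous ℓ := ℓ.continuous_of_finiteDimensional
  have : IsFiniteMeasure (volume.restrict (pyramid (Set.range y))) :=
    isFiniteMeasure_restrict.mpr (isCompact_pyramid (Set.finite_range y)).measure_ne_top
  rw [← measureReal_restrict_apply_univ]
  refine integral_abs_le_of_integral_sq_le ?_ (by positivity) ?_
  · exact (memLp_two_iff_integrable_sq hcont.aestronglyMeasurable).mpr
      (integrableOn_pyramid_range y (hcont.pow 2))
  · rw [setIntegral_pyramid_range_sq, measureReal_restrict_apply_univ]
    gcongr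
    exact add_sq_div_le_sq_sqrt_add_abs_div (by positivity) _ (by positivity)

theorem setIntegral_pyramid_range_sum_abs_le {κ : Type*} [Fintype κ]
    (ℓ : κ → Module.Dual ℝ (ι → ℝ)) {M : ℝ} (hM : ∀ ε, ∑ j, |ℓ j (rademacherSum y ε)| ≤ M) :
    ∫ x in pyramid (Set.range y), ∑ j, |ℓ j x| ≤
      (1 + √2) / (Fintype.card ι + 1) * M * volume.real (pyramid (Set.range y)) := by
  classical
  have square : ∑ j, √(∑ i, ℓ j (y i) ^ 2) ≤ √2 * M := by
    calc ∑ j, √(∑ i, ℓ j (y i) ^ 2)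
        ≤ ∑ j, √2 * ((∑ ε, |ℓ j (rademacherSum y ε)|) / 2 ^ Fintype.card ι) := by
          refine Finset.sum_le_sum fun j _ ↦ ?_
          simpa [rademacherSum] using khintchine_inequality fun i ↦ ℓ j (y i)
      _ = √2 * ((∑ ε, ∑ j, |ℓ j (rademacherSum y ε)|) / 2 ^ Fintype.card ι) := by
          rw [Finset.sum_comm, ← Finset.mul_sum, Finset.sum_div]
      _ ≤ √2 * ((∑ _ : ι → Bool, M) / 2 ^ Fintype.card ι) := by
          gcongr
          exact hM _
      _ = √2 * M := by simp [mul_div_cancel_left₀]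
  have linear : ∑ j, |∑ i, ℓ j (y i)| ≤ M := by
    simpa [rademacherSum, boolSign] using hM fun _ ↦ true
  have hint (j : κ) : IntegrableOn (fun x ↦ |ℓ j x|) (pyramid (Set.range y)) :=
    integrableOn_pyramid_range y (ℓ j).continuous_of_finiteDimensional.abs
  calc ∫ x in pyramid (Set.range y), ∑ j, |ℓ j x|
      = ∑ j, ∫ x in pyramid (Set.range y), |ℓ j x| := integral_finsetSum _ fun j _ ↦ hint j
    _ ≤ ∑ j, (√(∑ i, ℓ j (y i) ^ 2) + |∑ i, ℓ j (y i)|) / (Fintype.card ι + 1) *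
          volume.real (pyramid (Set.range y)) :=
        Finset.sum_le_sum fun j _ ↦ setIntegral_pyramid_range_abs_le y (ℓ j)
    _ = (∑ j, √(∑ i, ℓ j (y i) ^ 2) + ∑ j, |∑ i, ℓ j (y i)|) / (Fintype.card ι + 1) *
          volume.real (pyramid (Set.range y)) := by
        rw [← Finset.sum_mul, ← Finset.sum_div, Finset.sum_add_distrib]
    _ ≤ (√2 * M + M) / (Fintype.card ι + 1) * volume.real (pyramid (Set.range y)) := by
        gcongr
    _ = (1 + √2) / (Fintype.card ι + 1) * M * volume.real (pyramid (Set.range y)) := by ring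

end Pyramid

section Faces

variable {V : Type*} [AddCommGroup V] [Module ℝ V] {s F : Set V} {ℓ : Module.Dual ℝ V}

theorem convexHull_sep_eq_one (hℓ : ∀ x ∈ s, ℓ x ≤ 1) :
    convexHull ℝ {x ∈ s | ℓ x = 1} = {x ∈ convexHull ℝ s | ℓ x = 1} := by
  refine Set.Subset.antisymm (fun x hx ↦ ?_) fun x hx ↦ ?_
  · exact ⟨convexHull_mono (Set.sep_subset _ _) hx,
      convexHull_min (fun y hy ↦ hy.2) (convex_hyperplane ℓ.isLinear 1) hx⟩
  · let A : Set V := {x | ℓ x < 1} ∪ convexHull ℝ {x ∈ s | ℓ x = 1}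
    have le_one {x : V} (hx : x ∈ A) : ℓ x ≤ 1 :=
      hx.elim (fun h ↦ le_of_lt h) fun h ↦
        convexHull_min (fun y hy ↦ hy.2.le) (convex_halfSpace_le ℓ.isLinear 1) h
    have convex_A : Convex ℝ A := by
      refine convex_iff_forall_pos.mpr fun x hx y hy a b ha hb hab ↦ ?_
      by_cases hxy : ℓ x < 1 ∨ ℓ y < 1
      · refine Or.inl ?_
        simp only [Set.mem_ofPred_eq, map_add, map_smul, smul_eq_mul]
        rcases hxy with h | h
        · nlinarith [le_one hy]
        · nlinarith [le_one hx]
      · rw [not_or] at hxy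
        exact Or.inr (convex_convexHull ℝ _ (hx.resolve_left hxy.1) (hy.resolve_left hxy.2)
          ha.le hb.le hab)
    have s_subset : s ⊆ A := fun y hy ↦
      (hℓ y hy).lt_or_eq.imp id fun h ↦ subset_convexHull ℝ _ ⟨hy, h⟩
    exact (convexHull_min s_subset convex_A hx.1).resolve_left hx.2.not_lt

theorem vectorSpan_eq_ker_of_span_eq_top (hF : F.Nonempty) (hℓ : ∀ x ∈ F, ℓ x = 1)
    (hspan : Submodule.span ℝ F = ⊤) : vectorSpan ℝ F = LinearMap.ker ℓ := by
  refine le_antisymm ?_ fun x hx ↦ ?_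
  · rw [vectorSpan_def, Submodule.span_le]
    rintro _ ⟨x, hx, y, hy, rfl⟩
    simp [hℓ x hx, hℓ y hy]
  · obtain ⟨z, hz⟩ := hF
    have projection (y : V) : y - ℓ y • z ∈ vectorSpan ℝ F := by
      induction (hspan ▸ Submodule.mem_top : y ∈ Submodule.span ℝ F)
        using Submodule.span_induction with
      | mem y hy => simpa [hℓ y hy] using vsub_mem_vectorSpan ℝ hy hz
      | zero => simp
      | add y y' _ _ hy hy' => simpa [add_smul, add_sub_add_comm] using add_mem hy hy'
      | smul a y _ hy => simpa [smul_sub, mul_smul] using Submodule.smul_mem _ a hy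
    simpa [LinearMap.mem_ker.mp hx] using projection x

theorem finrank_vectorSpan_add_one [FiniteDimensional ℝ V] (hF : F.Nonempty)
    (hℓ : ∀ x ∈ F, ℓ x = 1) (hspan : Submodule.span ℝ F = ⊤) :
    Module.finrank ℝ (vectorSpan ℝ F) + 1 = Module.finrank ℝ V := by
  have hℓ0 : ℓ ≠ 0 := by
    rintro rfl
    obtain ⟨z, hz⟩ := hF
    simpa using hℓ z hz
  rw [vectorSpan_eq_ker_of_span_eq_top hF hℓ hspan]
  exact Module.Dual.finrank_ker_add_one_of_ne_zero hℓ0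

end Faces

section Nullsets

variable {E : Type*} [NormedAddCommGroup E] [NormedSpace ℝ E] [MeasurableSpace E] [BorelSpace E]
  [FiniteDimensional ℝ E] (μ : Measure E) [μ.IsAddHaarMeasure]

theorem aedisjoint_pyramid {F F' : Set E} {ℓ ℓ' : Module.Dual ℝ E} (hne : ℓ ≠ ℓ')
    (hF : ∀ x ∈ F, ℓ' x ≤ ℓ x) (hF' : ∀ x ∈ F', ℓ x ≤ ℓ' x) :
    AEDisjoint μ (pyramid F) (pyramid F') := by
  have hker : LinearMap.ker (ℓ - ℓ') ≠ ⊤ := by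
    rwa [Ne, LinearMap.ker_eq_top, sub_eq_zero]
  refine measure_mono_null (fun x hx ↦ ?_) (Measure.addHaar_submodule μ _ hker)
  simpa [sub_eq_zero] using
    (le_of_mem_pyramid hF' hx.2).antisymm (le_of_mem_pyramid hF hx.1)

lemma ae_notMem_span_subset {s : Set E} (hs : s.Finite) :
    ∀ᵐ x ∂μ, ∀ t ⊆ s, Submodule.span ℝ t ≠ ⊤ → x ∉ Submodule.span ℝ t := by
  refine (ae_ball_iff hs.finite_subsets.countable).mpr fun t _ ↦ ?_
  refine Filter.eventually_imp_distrib_left.mpr fun ht ↦ ?_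
  exact measure_eq_zero_iff_ae_notMem.mp (Measure.addHaar_submodule μ _ ht)

end Nullsets

section SupportingFunctional

variable {E : Type*} [NormedAddCommGroup E] [NormedSpace ℝ E] {P F : Set E}

lemma isExposed_sep_eq_one {ℓ : StrongDual ℝ E} (hℓ : ∀ x ∈ P, ℓ x ≤ 1) :
    IsExposed ℝ P {x ∈ P | ℓ x = 1} := by
  rintro ⟨z, hzP, hz⟩
  refine ⟨ℓ, Set.ext fun x ↦ and_congr_right fun hx ↦ ⟨fun h y hy ↦ h ▸ hℓ y hy, fun h ↦ ?_⟩⟩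
  exact (hℓ x hx).antisymm (hz ▸ h z hzP)

theorem exists_eq_sep_eq_one_of_isExposed (h0 : 0 ∈ interior P) (hF : IsExposed ℝ P F)
    (hne : F.Nonempty) (hFP : F ≠ P) :
    ∃ ℓ : StrongDual ℝ E, (∀ x ∈ P, ℓ x ≤ 1) ∧ F = {x ∈ P | ℓ x = 1} := by
  obtain ⟨ℓ, rfl⟩ := hF hne
  obtain ⟨z, hzP, hz⟩ := hne
  have nonneg : 0 ≤ ℓ z := by simpa using hz 0 (interior_subset h0)
  have ne_zero : ℓ z ≠ 0 := by
    intro hz0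
    have localMax : IsLocalMax ℓ 0 := by
      filter_upwards [mem_interior_iff_mem_nhds.mp h0] with x hx
      simpa [hz0] using hz x hx
    obtain rfl := localMax.hasFDerivAt_eq_zero ℓ.hasFDerivAt
    exact hFP (by simp)
  have pos : 0 < ℓ z := nonneg.lt_of_ne' ne_zero
  refine ⟨(ℓ z)⁻¹ • ℓ, fun x hx ↦ ?_, Set.ext fun x ↦ and_congr_right fun hx ↦ ?_⟩
  · simpa [inv_mul_le_iff₀ pos] using hz x hx
  · simp only [smul_apply, smul_eq_mul, inv_mul_eq_one₀ ne_zero]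
    exact ⟨fun h ↦ (h z hzP).antisymm (hz x hx), fun h y hy ↦ h ▸ hz y hy⟩

theorem exists_dual_eq_one_of_mem_frontier (hP : Convex ℝ P) (h0 : 0 ∈ interior P) {z : E}
    (hz : z ∈ frontier P) : ∃ ℓ : StrongDual ℝ E, ℓ z = 1 ∧ ∀ x ∈ P, ℓ x ≤ 1 := by
  obtain ⟨ℓ, hℓz, hℓ⟩ := separate_convex_open_set h0 hP.interior isOpen_interior hz.2
  refine ⟨ℓ, hℓz, fun x hx ↦ ?_⟩
  refine closure_minimal (fun y hy ↦ (hℓ y hy).le) (isClosed_le ℓ.continuous continuous_const) ?_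
  rw [hP.closure_interior_eq_closure_of_nonempty_interior ⟨0, h0⟩]
  exact subset_closure hx

theorem exists_mem_pyramid_sep_eq_one (hP : Convex ℝ P) (hcomp : IsCompact P)
    (h0 : 0 ∈ interior P) {x : E} (hx : x ∈ P) (hx0 : x ≠ 0) :
    ∃ ℓ : StrongDual ℝ E, (∀ y ∈ P, ℓ y ≤ 1) ∧ x ∈ pyramid {y ∈ P | ℓ y = 1} := by
  have h0' : P ∈ nhds 0 := mem_interior_iff_mem_nhds.mp h0
  have pos : 0 < gauge P x := (gauge_pos (absorbent_nhds_zero h0')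
    ((NormedSpace.isVonNBounded_iff ℝ).mpr hcomp.isBounded)).mpr hx0
  have boundary : (gauge P x)⁻¹ • x ∈ frontier P := by
    rw [← gauge_eq_one_iff_mem_frontier hP h0', gauge_smul_of_nonneg (inv_nonneg.mpr pos.le),
      smul_eq_mul, inv_mul_cancel₀ pos.ne']
  obtain ⟨ℓ, hℓz, hℓ⟩ := exists_dual_eq_one_of_mem_frontier hP h0 boundary
  refine ⟨ℓ, hℓ, ?_⟩
  rw [← smul_inv_smul₀ pos.ne' x]
  exact smul_mem_pyramid pos.le (gauge_le_one_of_mem hx)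
    ⟨hcomp.isClosed.frontier_subset boundary, hℓz⟩

lemma zero_mem_interior_of_eq_neg (hP : Convex ℝ P) (hsymm : P = -P)
    (hint : (interior P).Nonempty) : 0 ∈ interior P := by
  obtain ⟨p, hp⟩ := hint
  have hp' : -p ∈ interior P := by
    rw [hsymm]
    exact ((Homeomorph.neg E).preimage_interior P).subset (by simpa using hp)
  simpa using hP.interior.midpoint_mem hp hp'

end SupportingFunctional

section Facets

variable {n : ℕ} {P F s : Set (Fin n → ℝ)}

lemma IsFacet.exists_eq_sep_eq_one (h0 : 0 ∈ interior P) (hF : IsFacet P F) :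
    ∃ ℓ : StrongDual ℝ (Fin n → ℝ), (∀ x ∈ P, ℓ x ≤ 1) ∧ F = {x ∈ P | ℓ x = 1} :=
  exists_eq_sep_eq_one_of_isExposed h0 hF.1 hF.2.2.1 hF.2.1

lemma IsFacet.subset (hF : IsFacet P F) : F ⊆ P := hF.1.subset

theorem isFacet_sep_eq_one [NeZero n] (h0 : 0 ∈ P) {ℓ : StrongDual ℝ (Fin n → ℝ)}
    (hℓ : ∀ x ∈ P, ℓ x ≤ 1) (hspan : Submodule.span ℝ {x ∈ P | ℓ x = 1} = ⊤) :
    IsFacet P {x ∈ P | ℓ x = 1} := by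
  have nonempty : {x ∈ P | ℓ x = 1}.Nonempty := by
    by_contra! hempty
    simp [hempty] at hspan
  refine ⟨isExposed_sep_eq_one hℓ, fun h ↦ ?_, nonempty, ?_⟩
  · have h0F : (0 : Fin n → ℝ) ∈ {x ∈ P | ℓ x = 1} := h.symm.subset h0
    simpa using h0F.2
  · have dim := finrank_vectorSpan_add_one (ℓ := ℓ.toLinearMap) nonempty (fun x hx ↦ hx.2) hspan
    rw [Module.finrank_fin_fun] at dim
    rw [direction_affineSpan]
    omega

theorem finite_facets (hs : s.Finite) (h0 : 0 ∈ interior (convexHull ℝ s)) :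
    {F | IsFacet (convexHull ℝ s) F}.Finite := by
  refine (hs.finite_subsets.image (convexHull ℝ)).subset fun F hF ↦ ?_
  obtain ⟨ℓ, hℓ, rfl⟩ := IsFacet.exists_eq_sep_eq_one h0 hF
  exact ⟨{x ∈ s | ℓ x = 1}, Set.sep_subset _ _, convexHull_sep_eq_one (ℓ := ℓ.toLinearMap)
    fun x hx ↦ hℓ x (subset_convexHull ℝ s hx)⟩

theorem ae_exists_mem_pyramid_of_isFacet [NeZero n] (hs : s.Finite)
    (h0 : 0 ∈ interior (convexHull ℝ s)) :
    ∀ᵐ x, x ∈ convexHull ℝ s → ∃ F, IsFacet (convexHull ℝ s) F ∧ x ∈ pyramid F := by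
  filter_upwards [ae_notMem_span_subset volume hs] with x hx hxP
  have hx0 : x ≠ 0 := by
    simpa using hx ∅ (Set.empty_subset s)
  obtain ⟨ℓ, hℓ, hxℓ⟩ := exists_mem_pyramid_sep_eq_one (convex_convexHull ℝ s)
    (hs.isCompact_convexHull ℝ) h0 hxP hx0
  refine ⟨_, isFacet_sep_eq_one (interior_subset h0) hℓ ?_, hxℓ⟩
  have vertices : convexHull ℝ {y ∈ s | ℓ y = 1} = {y ∈ convexHull ℝ s | ℓ y = 1} :=
    convexHull_sep_eq_one (ℓ := ℓ.toLinearMap) fun y hy ↦ hℓ y (subset_convexHull ℝ s hy)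
  have vertices_span : Submodule.span ℝ {y ∈ s | ℓ y = 1} = ⊤ := by
    by_contra htop
    refine hx _ (Set.sep_subset _ _) htop ?_
    rw [← vertices, pyramid_convexHull] at hxℓ
    exact pyramid_subset (Submodule.convex _) (zero_mem _) Submodule.subset_span hxℓ
  rw [← top_le_iff, ← vertices_span, ← vertices]
  exact Submodule.span_mono (subset_convexHull ℝ _)

theorem pairwise_aedisjoint_pyramid_of_isFacet (h0 : 0 ∈ interior P) :
    Pairwise (Function.onFun (AEDisjoint volume) fun F : {F // IsFacet P F} ↦ pyramid F.1) := by
  rintro ⟨F, hF⟩ ⟨F', hF'⟩ hne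
  obtain ⟨ℓ, hℓ, rfl⟩ := hF.exists_eq_sep_eq_one h0
  obtain ⟨ℓ', hℓ', rfl⟩ := hF'.exists_eq_sep_eq_one h0
  have functional_ne : ℓ.toLinearMap ≠ ℓ'.toLinearMap := by
    intro h
    obtain rfl : ℓ = ℓ' := ContinuousLinearMap.coe_injective h
    exact hne rfl
  exact aedisjoint_pyramid volume functional_ne (fun x hx ↦ (hℓ' x hx.1).trans_eq hx.2.symm)
    fun x hx ↦ (hℓ x hx.1).trans_eq hx.2.symm

theorem hasSum_setIntegral_pyramid_of_isFacet [NeZero n] {G : Type*} [NormedAddCommGroup G]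
    [NormedSpace ℝ G] (hs : s.Finite) (h0 : 0 ∈ interior (convexHull ℝ s))
    {f : (Fin n → ℝ) → G} (hf : IntegrableOn f (convexHull ℝ s)) :
    HasSum (fun F : {F // IsFacet (convexHull ℝ s) F} ↦ ∫ x in pyramid F.1, f x)
      (∫ x in convexHull ℝ s, f x) := by
  have : Finite {F // IsFacet (convexHull ℝ s) F} := (finite_facets hs h0).to_subtype
  have union_subset : ⋃ F : {F // IsFacet (convexHull ℝ s) F}, pyramid F.1 ⊆ convexHull ℝ s :=
    Set.iUnion_subset fun F ↦
      pyramid_subset (convex_convexHull ℝ s) (interior_subset h0) F.2.subset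
  have union_eq : ⋃ F : {F // IsFacet (convexHull ℝ s) F}, pyramid F.1 =ᵐ[volume]
      convexHull ℝ s := by
    refine union_subset.eventuallyLE.antisymm ?_
    filter_upwards [ae_exists_mem_pyramid_of_isFacet hs h0] with x hx hxP
    obtain ⟨F, hF, hxF⟩ := hx hxP
    exact Set.mem_iUnion.mpr ⟨⟨F, hF⟩, hxF⟩
  rw [← setIntegral_congr_set union_eq]
  exact hasSum_integral_iUnion_ae (fun F ↦ (convex_convexHull ℝ _).nullMeasurableSet volume)
    (pairwise_aedisjoint_pyramid_of_isFacet h0) (hf.mono_set union_subset)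

end Facets

theorem mean_sum_abs_dual_convexHull_le_of_isFacet {n : ℕ} [NeZero n] {s : Set (Fin n → ℝ)}
    (hs : s.Finite) (h0 : 0 ∈ interior (convexHull ℝ s)) {κ : Type*} [Fintype κ]
    (ℓ : κ → Module.Dual ℝ (Fin n → ℝ)) {M : ℝ}
    (hM : ∀ F, IsFacet (convexHull ℝ s) F → ∃ y : Fin n → Fin n → ℝ,
      F = convexHull ℝ (Set.range y) ∧ ∀ ε, ∑ j, |ℓ j (rademacherSum y ε)| ≤ M) :
    (volume (convexHull ℝ s)).toReal⁻¹ * ∫ x in convexHull ℝ s, ∑ j, |ℓ j x| ≤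
      (1 + √2) / (n + 1) * M := by
  have compact : IsCompact (convexHull ℝ s) := hs.isCompact_convexHull ℝ
  have volume_pos : 0 < (volume (convexHull ℝ s)).toReal :=
    ENNReal.toReal_pos
      (Measure.measure_pos_of_mem_nhds volume (mem_interior_iff_mem_nhds.mp h0)).ne'
      compact.measure_ne_top
  have continuous_norm : Continuous fun x ↦ ∑ j, |ℓ j x| :=
    continuous_finsetSum _ fun j _ ↦ (ℓ j).continuous_of_finiteDimensional.abs
  have total := hasSum_setIntegral_pyramid_of_isFacet hs h0
    (continuous_norm.continuousOn.integrableOn_compact compact)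
  have total_volume := (hasSum_setIntegral_pyramid_of_isFacet hs h0
    (continuousOn_const (c := (1 : ℝ)) |>.integrableOn_compact compact)).mul_left
      ((1 + √2) / (n + 1) * M)
  have facet_bound (F : {F // IsFacet (convexHull ℝ s) F}) :
      ∫ x in pyramid F.1, ∑ j, |ℓ j x| ≤ (1 + √2) / (n + 1) * M * ∫ _ in pyramid F.1, (1 : ℝ) := by
    obtain ⟨y, hy, hyM⟩ := hM F.1 F.2
    simpa [hy, pyramid_convexHull] using setIntegral_pyramid_range_sum_abs_le y ℓ hyM
  rw [inv_mul_le_iff₀' volume_pos]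
  simpa [measureReal_def] using hasSum_le facet_bound total total_volume

theorem mean_l1_norm_symmetric_polytope_general {n : ℕ} [NeZero n] {s : Set (Fin n → ℝ)}
    (hs : s.Finite) (h0 : 0 ∈ interior (convexHull ℝ s)) {m : ℕ} (hm : 0 < m)
    (Y : Fin m → Fin n → Fin n → ℝ)
    (hfacets : ∀ F, IsFacet (convexHull ℝ s) F → ∃ k, F = convexHull ℝ (Set.range (Y k))) :
    (volume (convexHull ℝ s)).toReal⁻¹ * ∫ x in convexHull ℝ s, ∑ j, |x j| ≤
      (1 + √2) / (n + 1) *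
        Finset.univ.sup' ⟨(⟨0, hm⟩, fun _ ↦ true), Finset.mem_univ _⟩
          fun kε : Fin m × (Fin n → Bool) ↦ ∑ j, |rademacherSum (Y kε.1) kε.2 j| :=
  mean_sum_abs_dual_convexHull_le_of_isFacet hs h0 (fun j ↦ LinearMap.proj j) fun F hF ↦
    (hfacets F hF).imp' Y fun k hk ↦ ⟨hk, fun ε ↦ Finset.le_sup'
      (fun kε : Fin m × (Fin n → Bool) ↦ ∑ j, |rademacherSum (Y kε.1) kε.2 j|)
      (Finset.mem_univ (k, ε))⟩

/-- For a symmetric polytope `P ⊂ ℝⁿ` whose facets are simplices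
`conv{y₁,…,yₙ}` (enumerated by `Y`),
`(1/|P|)·∫_P ‖x‖₁ dx ≤ ((1+√2)/n)·max_{facets, signs} ‖ε₁y₁+⋯+εₙyₙ‖₁`. -/
theorem mean_l1_norm_symmetric_polytope (n : ℕ) (hn : 1 ≤ n)
    (P : Set (Fin n → ℝ)) (N : ℕ) (v : Fin N → (Fin n → ℝ))
    (hP : P = convexHull ℝ (Set.range v)) (hint : (interior P).Nonempty)
    (hsymm : P = -P)
    (m : ℕ) (hm : 0 < m) (Y : Fin m → Fin n → (Fin n → ℝ))
    (hY : ∀ k, IsFacet P (convexHull ℝ (Set.range (Y k))))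
    (hfacets : ∀ F, IsFacet P F → ∃ k, F = convexHull ℝ (Set.range (Y k))) :
    (volume P).toReal⁻¹ * ∫ x in P, ∑ j, |x j| ≤
      ((1 + Real.sqrt 2) / n) *
        Finset.univ.sup'
          ⟨(⟨0, hm⟩, fun _ => true), Finset.mem_univ _⟩
          (fun kε : Fin m × (Fin n → Bool) =>
            ∑ j, |∑ i, (if kε.2 i then (1 : ℝ) else -1) * Y kε.1 i j|) := by
  have : NeZero n := ⟨Nat.one_le_iff_ne_zero.mp hn⟩
  have zero_mem : 0 ∈ interior P :=
    zero_mem_interior_of_eq_neg (hP ▸ convex_convexHull ℝ _) hsymm hint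
  subst hP
  simp only [← rademacherSum_apply]
  refine (mean_l1_norm_symmetric_polytope_general
    (Set.finite_range v) zero_mem hm Y hfacets).trans ?_
  gcongr
  · exact Finset.le_sup'_of_le _ (Finset.mem_univ (⟨0, hm⟩, fun _ ↦ true)) <|
      Finset.sum_nonneg fun j _ ↦ abs_nonneg _
  · linarith
end
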